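/- Let H be an affine quasi-hereditary algebra over a field k with finite index poset (Π, ≤). Let V ∈ H-gmod and fix a separated filtration V = V_0 ⊇ V_1 ⊇ ⋯ all of whose subquotients V_r/V_{r+1} are simple. Assume ext¹_H(Δ(σ), V) = 0 for all σ ∈ Π. Then for each saturated subset A ⊂ Π there exists a filtration V = W(A)_0 ⊇ W(A)_1 ⊇ ⋯ such that: (α) for each r ≥ 0 the subquotient W(A)_r/W(A)_{r+1} has a finite ∇̄-filtration whose subquotients are of the form ≃ ∇̄(σ) with σ ∈ Π ∖ A; and (β) for each n ≥ 0 one has supp(W(A)_N/(V_n ∩ W(A)_N)) ⊂ A for all sufficiently large N. -/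

import Mathlib

/-!
The filtration `W(A)` is built by splitting off proper costandard modules from the top of `V`, one
at a time. Write `B` for the saturated set and suppose that `T` satisfies `ext¹(Δ(ρ), T) = 0` for
all `ρ` and receives a nonzero homogeneous map from some `P(π)` with `π ∉ B`.

*Splitting off.* Among all nonzero maps `P(σ) → T` with `σ ∉ B` take one whose degree, corrected by
a weight that grows sufficiently along the order of `Π`, is minimal. Then all images of maps from
`P(τ)`, `τ > σ`, live in degrees too high to interfere with this map, so that it factors through
`Δ(σ)`, and there is a graded submodule `N` such that the sum of `N` and the image of `P(σ)`
contains all images of maps from `P(τ)`, `τ ≥ σ`, while `N` does not contain the image of `P(σ)`.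
The canonical map `Δ(σ) → ∇̄(σ)` defines a map from this sum to `∇̄(σ)` (`AHW.exists_to_pco`), and it
extends to `T` because only weights `τ ≱ σ` are left and `ext¹(Δ(τ), ∇̄(σ)) = 0`
(`AHW.extend_partial`). The result is a map `g : T → ∇̄(σ)` along which `Δ(σ) → ∇̄(σ)` lifts. As
`hom(Δ(ρ), ∇̄(σ))` is spanned by this one map for `ρ = σ` and zero otherwise, all maps
`Δ(ρ) → ∇̄(σ)` lift along `g`; together with `ext¹(Δ(ρ), T) = 0` this makes `g` surjective
(`AHW.surj_of_lift`) and gives `ext¹(Δ(ρ), ker g) = 0` (`AHW.ker_extProp`). So `ker g` satisfies the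
same condition as `T`, and the construction is iterated. If no map `P(π) → T` with `π ∉ B` exists,
the filtration is continued by `T` itself.

*Convergence.* If `T` receives a nonzero map from some `P(π)`, `π ∉ B`, of degree at most `D`, then
`g` is nonzero in some degree at most `D + E`, where `E` depends only on the algebra
(`AHW.exists_step`). The part of `V` in degrees at most `D + E` is finite dimensional, so for large
`N` no such map to `W(A)_N` is left. On the other hand `V_n` contains all components of `V` of
sufficiently large degree, since the simple modules are bounded above (`AHW.exists_grading_le`).
Hence a nonzero map `P(π) → W(A)_N/(V_n ∩ W(A)_N)`, which lifts to `W(A)_N`, has degree bounded in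
terms of `n` alone. This yields `(β)`.

Vanishing of `ext¹(U, T)` is used in the form `ExtProp U T`: homogeneous maps to `T` extend from the
kernel of a surjection `X → U` to `X`. Graded submodules are usually represented by injective
homogeneous maps onto them.
-/

open CategoryTheory

/-! ## Graded algebras (Laurentian) and the category `H`-gmod -/

/-- A `ℤ`-graded `k`-algebra. -/
structure GAlg (k : Type) [Field k] : Type 1 where
  carrier : Type
  [ring : Ring carrier]
  [alg : Algebra k carrier]
  grading : ℤ → Submodule k carrier
  internal : DirectSum.IsInternal grading
  one_mem : (1 : carrier) ∈ grading 0
  mul_mem : ∀ {i j : ℤ} {a b : carrier},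
    a ∈ grading i → b ∈ grading j → a * b ∈ grading (i + j)

attribute [instance] GAlg.ring GAlg.alg

variable {k : Type} [Field k]

namespace GAlg

/-- A graded algebra is Laurentian if the grading is bounded below and has
finite-dimensional components. -/
def Laurentian (A : GAlg k) : Prop :=
  (∃ N : ℤ, ∀ n : ℤ, n < N → A.grading n = ⊥) ∧
    ∀ n : ℤ, FiniteDimensional k (A.grading n)

/-- Property `(♠)`: there is a central `ℤ≥0`-graded subalgebra `Z ⊆ H_{≥0}` with
`Z₀ = k·1` such that `H` is finitely generated as a `Z`-module. -/
def Spade (A : GAlg k) : Prop :=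
  ∃ Z : ℤ → Submodule k A.carrier,
    (∀ n, Z n ≤ A.grading n) ∧
    (∀ n : ℤ, n < 0 → Z n = ⊥) ∧
    (Z 0 = Submodule.span k {(1 : A.carrier)}) ∧
    (∀ (i j : ℤ) (a b : A.carrier), a ∈ Z i → b ∈ Z j → a * b ∈ Z (i + j)) ∧
    (∀ (i : ℤ) (a : A.carrier), a ∈ Z i → ∀ h : A.carrier, a * h = h * a) ∧
    (∃ s : Finset A.carrier,
      AddSubgroup.closure
        {x : A.carrier | ∃ i : ℤ, ∃ z ∈ Z i, ∃ t ∈ s, x = z * t} = ⊤)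

end GAlg

/-- A finitely generated graded module over a graded algebra. -/
structure GMod (A : GAlg k) : Type 1 where
  carrier : Type
  [acg : AddCommGroup carrier]
  [mod : Module A.carrier carrier]
  [kmod : Module k carrier]
  [tower : IsScalarTower k A.carrier carrier]
  [scc : SMulCommClass k A.carrier carrier]
  grading : ℤ → Submodule k carrier
  internal : DirectSum.IsInternal grading
  smul_mem : ∀ {i j : ℤ} {a : A.carrier} {x : carrier},
    a ∈ A.grading i → x ∈ grading j → a • x ∈ grading (i + j)
  fg : Module.Finite A.carrier carrier

attribute [instance] GMod.acg GMod.mod GMod.kmod GMod.tower GMod.scc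

variable {A : GAlg k}

/-- The category `H`-gmod : morphisms are degree-preserving `H`-linear maps. -/
instance GMod.instCategory : Category (GMod A) where
  Hom M N := {f : M.carrier →ₗ[A.carrier] N.carrier //
    ∀ (i : ℤ) (x : M.carrier), x ∈ M.grading i → f x ∈ N.grading i}
  id M := ⟨LinearMap.id, fun _ _ h => h⟩
  comp f g := ⟨g.1.comp f.1, fun i x h => g.2 i _ (f.2 i x h)⟩
  id_comp f := Subtype.ext (LinearMap.ext fun _ => rfl)
  comp_id f := Subtype.ext (LinearMap.ext fun _ => rfl)
  assoc f g h := Subtype.ext (LinearMap.ext fun _ => rfl)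

/-- The grading shift `q^n`. -/
def GMod.shift (n : ℤ) (M : GMod A) : GMod A where
  carrier := M.carrier
  grading := fun i => M.grading (i - n)
  internal := by
    have h := (DirectSum.isInternal_submodule_iff_iSupIndep_and_iSup_eq_top
      M.grading).mp M.internal
    rw [DirectSum.isInternal_submodule_iff_iSupIndep_and_iSup_eq_top]
    refine ⟨h.1.comp (f := fun i : ℤ => i - n)
      (fun a b hab => by simp only [] at hab; omega), ?_⟩
    refine le_antisymm le_top ?_
    rw [← h.2]
    refine iSup_le fun i => ?_
    have hg : M.grading i = M.grading ((i + n) - n) := by norm_num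
    rw [hg]
    exact le_iSup (fun j : ℤ => M.grading (j - n)) (i + n)
  smul_mem := fun {i j a x} ha hx => by
    have h := M.smul_mem ha hx
    have : i + (j - n) = (i + j) - n := by ring
    simpa [this] using h
  fg := M.fg

/-- The grading shift as a (graded) functor. -/
def shiftF (A : GAlg k) (n : ℤ) : GMod A ⥤ GMod A where
  obj M := GMod.shift n M
  map f := ⟨f.1, fun i x h => f.2 (i - n) x h⟩

/-- Isomorphism in `H`-gmod, concretely. -/
structure GIso (M N : GMod A) where
  e : M.carrier ≃ₗ[A.carrier] N.carrier
  mem : ∀ (i : ℤ) (x : M.carrier), x ∈ M.grading i → e x ∈ N.grading i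
  mem' : ∀ (i : ℤ) (y : N.carrier), y ∈ N.grading i → e.symm y ∈ M.grading i

/-- A graded (homogeneous) submodule. -/
def GMod.IsGSub (M : GMod A) (W : Submodule A.carrier M.carrier) : Prop :=
  W.restrictScalars k = ⨆ i : ℤ, (W.restrictScalars k ⊓ M.grading i)

/-- The subquotient `W/W'` of a graded module. -/
abbrev sqMod (M : GMod A) (W W' : Submodule A.carrier M.carrier) : Type :=
  W ⧸ (W'.comap W.subtype)

/-- The induced grading on a subquotient. -/
abbrev sqGrading (M : GMod A) (W W' : Submodule A.carrier M.carrier) (i : ℤ) :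
    Submodule k (sqMod M W W') :=
  ((M.grading i).comap ((W.subtype).restrictScalars k)).map
    (((W'.comap W.subtype).mkQ).restrictScalars k)

/-- The subquotient `W/W'` is isomorphic, as a graded module, to `N`. -/
def SQIso (M : GMod A) (W W' : Submodule A.carrier M.carrier) (N : GMod A) : Prop :=
  ∃ e : (sqMod M W W') ≃ₗ[A.carrier] N.carrier,
    ∀ i : ℤ, (sqGrading M W W' i).map
      ((e : sqMod M W W' →ₗ[A.carrier] N.carrier).restrictScalars k) = N.grading i

/-- A separated filtration by graded submodules. -/
structure GFilt (M : GMod A) where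
  F : ℕ → Submodule A.carrier M.carrier
  first : F 0 = ⊤
  anti : ∀ n, F (n + 1) ≤ F n
  graded : ∀ n, M.IsGSub (F n)
  separated : ∀ x : M.carrier, (∀ n, x ∈ F n) → x = 0

/-- The filtration `Φ` has all subquotients zero or of the form `q^d N` with
`N` in the family `S`. -/
def FiltBy (M : GMod A) (Φ : GFilt M) (S : Set (GMod A)) : Prop :=
  ∀ n : ℕ, Subsingleton (sqMod M (Φ.F n) (Φ.F (n + 1))) ∨
    ∃ N ∈ S, ∃ d : ℤ, SQIso M (Φ.F n) (Φ.F (n + 1)) (GMod.shift d N)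

/-- Homogeneous (degree `d`) `H`-linear maps. -/
def ghomSet (M N : GMod A) (d : ℤ) : Set (M.carrier →ₗ[A.carrier] N.carrier) :=
  {f | ∀ (i : ℤ) (x : M.carrier), x ∈ M.grading i → f x ∈ N.grading (i + d)}

/-- Homogeneous degree `d` maps as a `k`-submodule of all `H`-linear maps. -/
def ghomSub (M N : GMod A) (d : ℤ) :
    Submodule k (M.carrier →ₗ[A.carrier] N.carrier) where
  carrier := ghomSet M N d
  add_mem' := fun hf hg i x hx => (N.grading (i + d)).add_mem (hf i x hx) (hg i x hx)
  zero_mem' := fun i x _ => (N.grading (i + d)).zero_mem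
  smul_mem' := fun c f hf i x hx => by
    simpa using (N.grading (i + d)).smul_mem c (hf i x hx)

/-- A graded-simple module. -/
def IsGSimple (M : GMod A) : Prop :=
  Nontrivial M.carrier ∧
    ∀ W : Submodule A.carrier M.carrier, M.IsGSub W → W = ⊥ ∨ W = ⊤

/-- Graded projectivity. -/
def GProjective (P : GMod A) : Prop :=
  ∀ (M N : GMod A) (g : M ⟶ N) (h : P ⟶ N),
    Function.Surjective g.1 → ∃ l : P ⟶ M, l ≫ g = h

/-- Vanishing of all (graded) `ext¹` groups `ext¹(U, V) = ⊕ₙ Ext¹(qⁿU, V) = 0`: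
every extension of a shift of `U` by `V` splits. -/
def Ext1Vanish (U V : GMod A) : Prop :=
  ∀ (n : ℤ) (E : GMod A) (f : V ⟶ E) (g : E ⟶ GMod.shift n U),
    Function.Injective f.1 → Function.Surjective g.1 →
    LinearMap.range f.1 = LinearMap.ker g.1 →
    ∃ s : GMod.shift n U ⟶ E, s ≫ g = 𝟙 (GMod.shift n U)

/-- The structure of an affine highest weight category on `H`-gmod, i.e. an
affine quasi-hereditary structure on `H` (Kleshchev).  The proper costandard
objects are axiomatised through their homological characterisation. -/
structure AHW (A : GAlg k) (Idx : Type) [Fintype Idx] [PartialOrder Idx] :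
    Type 1 where
  /-- simple objects -/
  L : Idx → GMod A
  /-- projective covers -/
  P : Idx → GMod A
  /-- standard objects -/
  Δ : Idx → GMod A
  /-- proper costandard objects -/
  pco : Idx → GMod A
  noeth : IsNoetherianRing A.carrier
  laur : A.Laurentian
  simple : ∀ π, IsGSimple (L π)
  simple_complete : ∀ S : GMod A, IsGSimple S →
    ∃ (π : Idx) (d : ℤ), Nonempty (GIso S (GMod.shift d (L π)))
  simple_irred : ∀ (π σ : Idx) (d : ℤ),
    Nonempty (GIso (L π) (GMod.shift d (L σ))) → π = σ
  proj : ∀ π, GProjective (P π)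
  cover : ∀ π, ∃ p : P π ⟶ L π, Function.Surjective p.1 ∧
    ∀ W : Submodule A.carrier (P π).carrier, (P π).IsGSub W →
      W ⊔ LinearMap.ker p.1 = ⊤ → W = ⊤
  /-- `Δ(π) = P(π)/(Σ images of graded maps from P(σ), σ ≰ π)` -/
  std_def : ∀ π, ∃ dm : P π ⟶ Δ π, Function.Surjective dm.1 ∧
    LinearMap.ker dm.1 =
      ⨆ (p : Σ σ : Idx, (P σ).carrier →ₗ[A.carrier] (P π).carrier)
        (_ : ¬ p.1 ≤ π) (_ : ∃ d, p.2 ∈ ghomSet (P p.1) (P π) d),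
          LinearMap.range p.2
  /-- the kernel of `P(π) ↠ Δ(π)` is filtered by shifts of `Δ(σ)`, `σ > π` -/
  ker_filt : ∀ π, ∃ Φ : GFilt (P π), (∃ N, Φ.F N = ⊥) ∧
    SQIso (P π) (Φ.F 0) (Φ.F 1) (Δ π) ∧
    ∀ n : ℕ, 1 ≤ n →
      (Subsingleton (sqMod (P π) (Φ.F n) (Φ.F (n + 1))) ∨
        ∃ σ : Idx, π < σ ∧ ∃ d : ℤ,
          SQIso (P π) (Φ.F n) (Φ.F (n + 1)) (GMod.shift d (Δ σ)))
  /-- `B_π = end(Δ(π))` is a graded polynomial ring on homogeneous generators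
  of positive degree -/
  end_poly : ∀ π, ∃ (nv : ℕ) (dg : Fin nv → ℤ),
    (∀ i, 0 < dg i) ∧
    ∃ e : MvPolynomial (Fin nv) k →ₐ[k] Module.End A.carrier (Δ π).carrier,
      Function.Bijective e ∧
      ∀ i, (e (MvPolynomial.X i) :
        (Δ π).carrier →ₗ[A.carrier] (Δ π).carrier) ∈ ghomSet (Δ π) (Δ π) (dg i)
  /-- `hom(P(π), Δ(σ))` is a graded free `B_σ`-module of finite rank -/
  hom_free : ∀ π σ, ∃ (mr : ℕ)
    (b : Fin mr → ((P π).carrier →ₗ[A.carrier] (Δ σ).carrier))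
    (db : Fin mr → ℤ),
    (∀ i, b i ∈ ghomSet (P π) (Δ σ) (db i)) ∧
    Function.Bijective (fun c : Fin mr → Module.End A.carrier (Δ σ).carrier =>
      ∑ i, LinearMap.comp (c i : (Δ σ).carrier →ₗ[A.carrier] (Δ σ).carrier) (b i))
  /-- the proper costandard objects have finite length … -/
  pco_finlen : ∀ π, IsFiniteLength A.carrier (pco π).carrier
  /-- … and satisfy `hom(Δ(σ), ∇̄(π)) = δ_{σπ} k` concentrated in degree 0 … -/
  pco_hom : ∀ π, ∃ f₀ : (Δ π).carrier →ₗ[A.carrier] (pco π).carrier,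
    f₀ ∈ ghomSet (Δ π) (pco π) 0 ∧ f₀ ≠ 0 ∧
    (∀ (d : ℤ) (f : (Δ π).carrier →ₗ[A.carrier] (pco π).carrier),
      f ∈ ghomSet (Δ π) (pco π) d → ∃ c : k, f = c • f₀) ∧
    ∀ (σ : Idx) (d : ℤ) (f : (Δ σ).carrier →ₗ[A.carrier] (pco π).carrier),
      f ∈ ghomSet (Δ σ) (pco π) d → σ ≠ π → f = 0
  /-- … and `ext¹(Δ(σ), ∇̄(π)) = 0` -/
  pco_ext : ∀ π σ, Ext1Vanish (Δ σ) (pco π)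

variable {Idx : Type} [Fintype Idx] [PartialOrder Idx]

/-- `V` has a `Δ`-filtration. -/
def HasDFilt (S : AHW A Idx) (M : GMod A) : Prop :=
  ∃ Φ : GFilt M, FiltBy M Φ (Set.range S.Δ)

/-- `V` has a `∇̄`-filtration. -/
def HasPCFilt (S : AHW A Idx) (M : GMod A) : Prop :=
  ∃ Φ : GFilt M, FiltBy M Φ (Set.range S.pco)

/-- Tilting modules. -/
def IsTilting (S : AHW A Idx) (M : GMod A) : Prop :=
  HasDFilt S M ∧ HasPCFilt S M

/-- The multiplicity `(V : Δ(π))` of `Δ(π)` in a given `Δ`-filtration. -/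
noncomputable def dMult (S : AHW A Idx) {M : GMod A} (Φ : GFilt M) (π : Idx) : ℕ :=
  Set.ncard {n : ℕ | ∃ d : ℤ,
    SQIso M (Φ.F n) (Φ.F (n + 1)) (GMod.shift d (S.Δ π))}

/-- `V` admits a (finite) `Δ`-filtration with `(V:Δ(π)) = 1` and `(V:Δ(σ)) = 0`
for `σ ≰ π`. -/
def MultCond (S : AHW A Idx) (M : GMod A) (π : Idx) : Prop :=
  ∃ Φ : GFilt M, FiltBy M Φ (Set.range S.Δ) ∧ (∃ N, Φ.F N = ⊥) ∧
    dMult S Φ π = 1 ∧ ∀ σ : Idx, ¬ σ ≤ π → dMult S Φ σ = 0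

/-- Indecomposability (no nontrivial graded idempotent endomorphism). -/
def Indec (M : GMod A) : Prop :=
  Nontrivial M.carrier ∧
    ∀ e : M ⟶ M, e ≫ e = e → e.1 = 0 ∨ e.1 = LinearMap.id

/-- A short exact sequence in `H`-gmod. -/
def SES {X Y Z : GMod A} (f : X ⟶ Y) (g : Y ⟶ Z) : Prop :=
  Function.Injective f.1 ∧ Function.Surjective g.1 ∧
    LinearMap.range f.1 = LinearMap.ker g.1

/-- The support of the subquotient `W/W'` of `M`: the set of `π` such that there
is a nonzero homogeneous map from `P(π)`. -/
def sqSupp {k : Type} [Field k] {A : GAlg k} {Idx : Type} [Fintype Idx]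
    [PartialOrder Idx] (S : AHW A Idx) (M : GMod A)
    (W W' : Submodule A.carrier M.carrier) : Set Idx :=
  {π | ∃ (f : (S.P π).carrier →ₗ[A.carrier] sqMod M W W') (d : ℤ),
    (∀ (i : ℤ) (x : (S.P π).carrier), x ∈ (S.P π).grading i →
      f x ∈ sqGrading M W W' (i + d)) ∧ f ≠ 0}

/-! ### Homogeneous components and homogeneous maps -/

section Internal

variable {M : Type} [AddCommGroup M] [Module k M] {ℳ : ℤ → Submodule k M}

/-- The projection onto the degree `i` component of an internal grading. -/
noncomputable def gpr (h : DirectSum.IsInternal ℳ) (i : ℤ) : M →ₗ[k] M :=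
  (ℳ i).subtype ∘ₗ DirectSum.component k ℤ (fun i => ℳ i) i ∘ₗ
    (LinearEquiv.ofBijective (DirectSum.coeLinearMap ℳ) h).symm.toLinearMap

theorem gpr_mem (h : DirectSum.IsInternal ℳ) (i : ℤ) (x : M) : gpr h i x ∈ ℳ i := by
  simp [gpr]

theorem gpr_coe (h : DirectSum.IsInternal ℳ) (i j : ℤ) {x : M} (hx : x ∈ ℳ j) :
    gpr h i x = if j = i then x else 0 := by
  have : (LinearEquiv.ofBijective (DirectSum.coeLinearMap ℳ) h).symm x =
      DirectSum.lof k ℤ (fun i => ℳ i) j ⟨x, hx⟩ := by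
    rw [LinearEquiv.symm_apply_eq]
    exact (DirectSum.coeLinearMap_lof ℳ j ⟨x, hx⟩).symm
  simp only [gpr, LinearMap.comp_apply, LinearEquiv.coe_coe, this]
  split_ifs with hij
  · subst hij
    simp [DirectSum.component.lof_self]
  · simp [DirectSum.component.of, hij]

theorem gpr_self (h : DirectSum.IsInternal ℳ) (i : ℤ) {x : M} (hx : x ∈ ℳ i) :
    gpr h i x = x := by
  simp [gpr_coe h i i hx]

theorem gpr_ne (h : DirectSum.IsInternal ℳ) {i j : ℤ} (hij : j ≠ i) {x : M} (hx : x ∈ ℳ j) :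
    gpr h i x = 0 := by
  simp [gpr_coe h i j hx, hij]

theorem internal_iSup (h : DirectSum.IsInternal ℳ) (x : M) : x ∈ ⨆ i, ℳ i := by
  rw [((DirectSum.isInternal_submodule_iff_iSupIndep_and_iSup_eq_top ℳ).1 h).2]
  trivial

/-- Induction on homogeneous elements. -/
theorem hom_induction (h : DirectSum.IsInternal ℳ) {p : M → Prop} (h0 : p 0)
    (hadd : ∀ x y, p x → p y → p (x + y)) (hhom : ∀ i x, x ∈ ℳ i → p x) (x : M) : p x :=
  Submodule.iSup_induction ℳ (motive := p) (internal_iSup h x) hhom h0 hadd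

/-- Every element is the finite sum of its homogeneous components. -/
theorem gpr_sum (h : DirectSum.IsInternal ℳ) (x : M) :
    ∃ s : Finset ℤ, x = ∑ i ∈ s, gpr h i x ∧ ∀ i, i ∉ s → gpr h i x = 0 := by
  classical
  have key : ∀ x : M, ∃ s : Finset ℤ, ∀ t, s ⊆ t →
      x = ∑ i ∈ t, gpr h i x ∧ ∀ i, i ∉ t → gpr h i x = 0 := by
    intro x
    induction x using hom_induction h with
    | h0 => exact ⟨∅, by simp⟩
    | hadd x y hx hy =>
      obtain ⟨s, hs⟩ := hx
      obtain ⟨t, ht⟩ := hy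
      refine ⟨s ∪ t, fun u hu => ?_⟩
      have h1 := hs u (Finset.union_subset_left hu)
      have h2 := ht u (Finset.union_subset_right hu)
      refine ⟨?_, fun i hi => ?_⟩
      · simp only [map_add, Finset.sum_add_distrib]
        rw [← h1.1, ← h2.1]
      · rw [map_add, h1.2 i hi, h2.2 i hi, add_zero]
    | hhom i x hx =>
      refine ⟨{i}, fun t ht => ⟨?_, fun j hj => ?_⟩⟩
      · simp only [Finset.singleton_subset_iff] at ht
        simp [gpr_coe h _ i hx, ht]
      · refine gpr_ne h (fun hh => hj ?_) hx
        subst hh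
        exact ht (by simp)
  obtain ⟨s, hs⟩ := key x
  exact ⟨s, hs s subset_rfl⟩

theorem gpr_ext (h : DirectSum.IsInternal ℳ) {x y : M}
    (hxy : ∀ i, gpr h i x = gpr h i y) : x = y := by
  rw [← sub_eq_zero]
  obtain ⟨s, hs, -⟩ := gpr_sum h (x - y)
  rw [hs]
  exact Finset.sum_eq_zero fun i _ => by rw [map_sub, hxy, sub_self]

/-- A family of submodules with a system of projections is an internal grading. -/
theorem internal_of_proj (π : ℤ → M →ₗ[k] M) (h1 : ∀ i x, x ∈ ℳ i → π i x = x)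
    (h2 : ∀ i j x, j ≠ i → x ∈ ℳ j → π i x = 0) (h3 : ∀ x, x ∈ ⨆ i, ℳ i) :
    DirectSum.IsInternal ℳ := by
  rw [DirectSum.isInternal_submodule_iff_iSupIndep_and_iSup_eq_top]
  refine ⟨?_, eq_top_iff.2 fun x _ => h3 x⟩
  intro i
  rw [Submodule.disjoint_def]
  intro x hx hx'
  have : (⨆ j, ⨆ (_ : j ≠ i), ℳ j) ≤ LinearMap.ker (π i) :=
    iSup₂_le fun j hj y hy => h2 i j y hj hy
  rw [← h1 i x hx]
  exact this hx'

end Internal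

section Graded

namespace GMod

/-- The projection of a graded module onto its degree `i` component. -/
noncomputable abbrev pr (M : GMod A) (i : ℤ) : M.carrier →ₗ[k] M.carrier := gpr M.internal i

/-- A submodule is graded exactly when it is stable under the projections to the components. -/
theorem isGSub_iff {M : GMod A} {W : Submodule A.carrier M.carrier} :
    M.IsGSub W ↔ ∀ x ∈ W, ∀ i, M.pr i x ∈ W := by
  constructor
  · intro h x hx i
    have hx' : x ∈ W.restrictScalars k := hx
    rw [h] at hx'
    induction hx' using Submodule.iSup_induction' with
    | mem j y hy =>
      have := gpr_coe M.internal i j hy.2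
      rw [GMod.pr, this]
      split_ifs
      · exact hy.1
      · exact W.zero_mem
    | zero => simp
    | add y z _ _ hy hz => rw [map_add]; exact W.add_mem (hy (by
        rename_i h1 h2; rw [← h] at h1; exact h1)) (hz (by
        rename_i h1 h2; rw [← h] at h2; exact h2))
  · intro h
    refine le_antisymm (fun x hx => ?_) (iSup_le fun i => inf_le_left)
    obtain ⟨s, hs, -⟩ := gpr_sum M.internal x
    rw [hs]
    exact Submodule.sum_mem _ fun i _ =>
      Submodule.mem_iSup_of_mem i ⟨h x hx i, gpr_mem M.internal i x⟩

theorem isGSub_bot (M : GMod A) : M.IsGSub ⊥ := isGSub_iff.2 fun x hx i => by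
  rw [Submodule.mem_bot] at hx; simp [hx]

theorem isGSub_top (M : GMod A) : M.IsGSub ⊤ := isGSub_iff.2 fun _ _ _ => trivial

theorem IsGSub.sup {M : GMod A} {W W' : Submodule A.carrier M.carrier}
    (h : M.IsGSub W) (h' : M.IsGSub W') : M.IsGSub (W ⊔ W') := by
  rw [isGSub_iff] at *
  intro x hx i
  obtain ⟨y, hy, z, hz, rfl⟩ := Submodule.mem_sup.1 hx
  rw [map_add]
  exact Submodule.add_mem_sup (h y hy i) (h' z hz i)

theorem IsGSub.inf {M : GMod A} {W W' : Submodule A.carrier M.carrier}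
    (h : M.IsGSub W) (h' : M.IsGSub W') : M.IsGSub (W ⊓ W') := by
  rw [isGSub_iff] at *
  exact fun x hx i => ⟨h x hx.1 i, h' x hx.2 i⟩

theorem isGSub_sSup {M : GMod A} {𝒮 : Set (Submodule A.carrier M.carrier)}
    (h : ∀ W ∈ 𝒮, M.IsGSub W) : M.IsGSub (sSup 𝒮) := by
  rw [isGSub_iff]
  intro x hx i
  rw [sSup_eq_iSup'] at hx ⊢
  induction hx using Submodule.iSup_induction' with
  | mem j y hy => exact Submodule.mem_iSup_of_mem j (isGSub_iff.1 (h _ j.2) y hy i)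
  | zero => simp
  | add y z _ _ hy hz => rw [map_add]; exact Submodule.add_mem _ hy hz

end GMod

/-- Homogeneous maps commute with the projections to the components, up to the degree. -/
theorem ghom_pr {M N : GMod A} {d : ℤ} {f : M.carrier →ₗ[A.carrier] N.carrier}
    (hf : f ∈ ghomSet M N d) (i : ℤ) (x : M.carrier) :
    f (M.pr i x) = N.pr (i + d) (f x) := by
  induction x using hom_induction M.internal with
  | h0 => simp
  | hadd x y hx hy => simp [hx, hy]
  | hhom j x hx =>
    rw [GMod.pr, GMod.pr, gpr_coe M.internal i j hx, gpr_coe N.internal (i + d) _ (hf j x hx)]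
    by_cases h : j = i <;> simp [h]

theorem smul_pr {M : GMod A} {i : ℤ} {a : A.carrier} (ha : a ∈ A.grading i) (j : ℤ)
    (x : M.carrier) : a • M.pr j x = M.pr (i + j) (a • x) := by
  induction x using hom_induction M.internal with
  | h0 => simp
  | hadd x y hx hy => simp [hx, hy]
  | hhom l x hx =>
    rw [GMod.pr, GMod.pr, gpr_coe M.internal j l hx,
      gpr_coe M.internal (i + j) _ (M.smul_mem ha hx)]
    by_cases h : l = j <;> simp [h]

theorem pr_smul {M : GMod A} {j : ℤ} {x : M.carrier} (hx : x ∈ M.grading j) (i : ℤ)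
    (b : A.carrier) : M.pr i (b • x) = gpr A.internal (i - j) b • x := by
  induction b using hom_induction A.internal with
  | h0 => simp
  | hadd a b ha hb => simp [add_smul, ha, hb]
  | hhom l b hb =>
    rw [GMod.pr, gpr_coe A.internal (i - j) l hb, gpr_coe M.internal i _ (M.smul_mem hb hx)]
    by_cases h : l = i - j
    · simp [h]
    · rw [if_neg h, if_neg (by omega), zero_smul]

theorem ghom_range {M N : GMod A} {d : ℤ} {f : M.carrier →ₗ[A.carrier] N.carrier}
    (hf : f ∈ ghomSet M N d) : N.IsGSub (LinearMap.range f) := by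
  rw [GMod.isGSub_iff]
  rintro _ ⟨x, rfl⟩ i
  exact ⟨M.pr (i - d) x, by rw [ghom_pr hf]; congr 2; omega⟩

theorem ghom_comap {M N : GMod A} {d : ℤ} {f : M.carrier →ₗ[A.carrier] N.carrier}
    (hf : f ∈ ghomSet M N d) {W : Submodule A.carrier N.carrier} (hW : N.IsGSub W) :
    M.IsGSub (W.comap f) := by
  rw [GMod.isGSub_iff] at *
  intro x hx i
  rw [Submodule.mem_comap, ghom_pr hf]
  exact hW _ hx _

theorem ghom_map {M N : GMod A} {d : ℤ} {f : M.carrier →ₗ[A.carrier] N.carrier}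
    (hf : f ∈ ghomSet M N d) {W : Submodule A.carrier M.carrier} (hW : M.IsGSub W) :
    N.IsGSub (W.map f) := by
  rw [GMod.isGSub_iff] at *
  rintro _ ⟨x, hx, rfl⟩ i
  exact ⟨M.pr (i - d) x, hW _ hx _, by rw [ghom_pr hf]; congr 2; omega⟩

theorem ghom_ker {M N : GMod A} {d : ℤ} {f : M.carrier →ₗ[A.carrier] N.carrier}
    (hf : f ∈ ghomSet M N d) : M.IsGSub (LinearMap.ker f) :=
  ghom_comap hf N.isGSub_bot

theorem ghom_comp {M N Q : GMod A} {d e : ℤ} {f : M.carrier →ₗ[A.carrier] N.carrier}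
    {g : N.carrier →ₗ[A.carrier] Q.carrier} (hg : g ∈ ghomSet N Q e) (hf : f ∈ ghomSet M N d) :
    g ∘ₗ f ∈ ghomSet M Q (d + e) := by
  intro i x hx
  rw [← add_assoc]
  exact hg _ _ (hf i x hx)

theorem ghom_sub {M N : GMod A} {d : ℤ} {f g : M.carrier →ₗ[A.carrier] N.carrier}
    (hf : f ∈ ghomSet M N d) (hg : g ∈ ghomSet M N d) : f - g ∈ ghomSet M N d :=
  fun i x hx => (N.grading (i + d)).sub_mem (hf i x hx) (hg i x hx)

theorem ghom_add {M N : GMod A} {d : ℤ} {f g : M.carrier →ₗ[A.carrier] N.carrier}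
    (hf : f ∈ ghomSet M N d) (hg : g ∈ ghomSet M N d) : f + g ∈ ghomSet M N d :=
  fun i x hx => (N.grading (i + d)).add_mem (hf i x hx) (hg i x hx)

theorem ghom_smul {M N : GMod A} {d : ℤ} {f : M.carrier →ₗ[A.carrier] N.carrier} (c : k)
    (hf : f ∈ ghomSet M N d) : c • f ∈ ghomSet M N d :=
  (ghomSub M N d).smul_mem c hf

theorem ghom_zero (M N : GMod A) (d : ℤ) :
    (0 : M.carrier →ₗ[A.carrier] N.carrier) ∈ ghomSet M N d :=
  (ghomSub M N d).zero_mem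

/-- A homogeneous linear map which is injective reflects degrees. -/
theorem ghom_reflect {M N : GMod A} {d : ℤ} {f : M.carrier →ₗ[A.carrier] N.carrier}
    (hf : f ∈ ghomSet M N d) (hinj : Function.Injective f) {i : ℤ} {x : M.carrier}
    (hx : f x ∈ N.grading (i + d)) : x ∈ M.grading i := by
  have : M.pr i x = x := hinj (by rw [ghom_pr hf]; exact gpr_self N.internal _ hx)
  rw [← this]
  exact gpr_mem M.internal i x

/-- A homogeneous preimage of a homogeneous element. -/
theorem ghom_lift_mem {M N : GMod A} {d : ℤ} {f : M.carrier →ₗ[A.carrier] N.carrier}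
    (hf : f ∈ ghomSet M N d) {i : ℤ} {y : N.carrier} (hy : y ∈ N.grading i)
    (hr : y ∈ LinearMap.range f) : ∃ x ∈ M.grading (i - d), f x = y := by
  obtain ⟨x, rfl⟩ := hr
  refine ⟨M.pr (i - d) x, gpr_mem M.internal _ x, ?_⟩
  rw [ghom_pr hf, sub_add_cancel]
  exact gpr_self N.internal _ hy

/-- Factorisation of homogeneous maps through a homogeneous surjection. -/
theorem ghom_factor {M N Q : GMod A} {d e : ℤ} {q : M.carrier →ₗ[A.carrier] N.carrier}
    (hq : q ∈ ghomSet M N d) (hs : Function.Surjective q)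
    {u : M.carrier →ₗ[A.carrier] Q.carrier} (hu : u ∈ ghomSet M Q e)
    (hk : LinearMap.ker q ≤ LinearMap.ker u) :
    ∃ v ∈ ghomSet N Q (e - d), v ∘ₗ q = u := by
  let v : N.carrier →ₗ[A.carrier] Q.carrier :=
    (LinearMap.ker q).liftQ u hk ∘ₗ (q.quotKerEquivOfSurjective hs).symm.toLinearMap
  have hv : ∀ x, v (q x) = u x := by
    intro x
    have : (q.quotKerEquivOfSurjective hs).symm (q x) = Submodule.Quotient.mk x := by
      rw [LinearEquiv.symm_apply_eq]; rfl
    simp [v, this]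
  refine ⟨v, fun i y hy => ?_, LinearMap.ext hv⟩
  obtain ⟨x, hx, rfl⟩ := ghom_lift_mem hq hy (hs y)
  rw [hv]
  have := hu _ x hx
  rwa [show i + (e - d) = i - d + e by ring]

namespace GMod

variable [IsNoetherianRing A.carrier]

/-- A graded submodule as a graded module. -/
def sub (M : GMod A) (W : Submodule A.carrier M.carrier) (hW : M.IsGSub W) : GMod A where
  carrier := W
  grading i := (M.grading i).comap (W.subtype.restrictScalars k)
  internal := by
    refine internal_of_proj (fun i =>
      { toFun := fun x => ⟨M.pr i x, isGSub_iff.1 hW x x.2 i⟩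
        map_add' := fun x y => Subtype.ext (map_add (M.pr i) (x : M.carrier) y)
        map_smul' := fun c x => Subtype.ext (map_smul (M.pr i) c (x : M.carrier)) }) ?_ ?_ ?_
    · exact fun i x hx => Subtype.ext (gpr_self M.internal i hx)
    · exact fun i j x hij hx => Subtype.ext (gpr_ne M.internal hij hx)
    · intro x
      obtain ⟨s, hs, -⟩ := gpr_sum M.internal (x : M.carrier)
      have : x = ∑ i ∈ s, ⟨M.pr i x, isGSub_iff.1 hW x x.2 i⟩ := Subtype.ext (by
        rw [Submodule.coe_sum]; exact hs)
      rw [this]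
      exact Submodule.sum_mem _ fun i _ => Submodule.mem_iSup_of_mem i (gpr_mem M.internal i _)
  smul_mem ha hx := M.smul_mem ha hx
  fg := by
    have := M.fg
    infer_instance

omit [IsNoetherianRing A.carrier] in
/-- The quotient by a graded submodule as a graded module. -/
def quot (M : GMod A) (W : Submodule A.carrier M.carrier) (hW : M.IsGSub W) : GMod A where
  carrier := M.carrier ⧸ W
  grading i := (M.grading i).map (W.mkQ.restrictScalars k)
  internal := by
    refine internal_of_proj (fun i =>
      ((W.restrictScalars k).mapQ (W.restrictScalars k) (M.pr i)
        (fun x hx => isGSub_iff.1 hW x hx i) : (M.carrier ⧸ W) →ₗ[k] (M.carrier ⧸ W))) ?_ ?_ ?_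
    · rintro i _ ⟨x, hx, rfl⟩
      exact congrArg W.mkQ (gpr_self M.internal i hx)
    · rintro i j _ hij ⟨x, hx, rfl⟩
      exact (congrArg W.mkQ (gpr_ne M.internal hij hx)).trans (map_zero _)
    · intro y
      obtain ⟨x, rfl⟩ := W.mkQ_surjective y
      obtain ⟨s, hs, -⟩ := gpr_sum M.internal x
      rw [hs, map_sum]
      exact Submodule.sum_mem _ fun i _ =>
        Submodule.mem_iSup_of_mem i ⟨_, gpr_mem M.internal i _, rfl⟩
  smul_mem := by
    rintro i j a _ ha ⟨x, hx, rfl⟩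
    exact ⟨a • x, M.smul_mem ha hx, rfl⟩
  fg := by
    have := M.fg
    infer_instance

/-- The direct sum of two graded modules. -/
def dsum (M N : GMod A) : GMod A where
  carrier := M.carrier × N.carrier
  grading i := (M.grading i).prod (N.grading i)
  internal := by
    refine internal_of_proj (fun i => (M.pr i).prodMap (N.pr i)) ?_ ?_ ?_
    · rintro i ⟨x, y⟩ ⟨hx, hy⟩
      exact Prod.ext (gpr_self M.internal i hx) (gpr_self N.internal i hy)
    · rintro i j ⟨x, y⟩ hij ⟨hx, hy⟩
      exact Prod.ext (gpr_ne M.internal hij hx) (gpr_ne N.internal hij hy)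
    · rintro ⟨x, y⟩
      have h1 : ((x, 0) : M.carrier × N.carrier) ∈
          ⨆ i, (M.grading i).prod (N.grading i) := by
        induction x using hom_induction M.internal with
        | h0 => exact Submodule.zero_mem _
        | hadd a b ha hb => simpa using Submodule.add_mem _ ha hb
        | hhom i a ha => exact Submodule.mem_iSup_of_mem i ⟨ha, Submodule.zero_mem _⟩
      have h2 : ((0, y) : M.carrier × N.carrier) ∈
          ⨆ i, (M.grading i).prod (N.grading i) := by
        induction y using hom_induction N.internal with
        | h0 => exact Submodule.zero_mem _
        | hadd a b ha hb => simpa using Submodule.add_mem _ ha hb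
        | hhom i a ha => exact Submodule.mem_iSup_of_mem i ⟨Submodule.zero_mem _, ha⟩
      simpa using Submodule.add_mem _ h1 h2
  smul_mem ha hx := ⟨M.smul_mem ha hx.1, N.smul_mem ha hx.2⟩
  fg := by
    have := M.fg
    have := N.fg
    infer_instance

end GMod

end Graded

/-! ### Finiteness consequences of the Laurentian condition -/

section Finiteness

/-- Finitely many homogeneous generators, each recorded together with its degree. -/
theorem exists_hom_gens (M : GMod A) : ∃ G : Finset (ℤ × M.carrier),
    (∀ p ∈ G, p.2 ∈ M.grading p.1) ∧
      Submodule.span A.carrier (Prod.snd '' (G : Set (ℤ × M.carrier))) = ⊤ := by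
  classical
  obtain ⟨s, hs⟩ := M.fg.fg_top
  choose t ht using fun x => gpr_sum M.internal x
  refine ⟨s.biUnion fun x => (t x).image fun i => (i, M.pr i x), ?_, ?_⟩
  · intro p hp
    simp only [Finset.mem_biUnion, Finset.mem_image] at hp
    obtain ⟨x, -, i, -, rfl⟩ := hp
    exact gpr_mem M.internal i x
  · rw [eq_top_iff, ← hs, Submodule.span_le]
    intro x hx
    rw [SetLike.mem_coe, (ht x).1]
    refine Submodule.sum_mem _ fun i hi => Submodule.subset_span ⟨(i, M.pr i x), ?_, rfl⟩
    simp only [Finset.coe_biUnion, Set.mem_iUnion]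
    exact ⟨x, hx, Finset.mem_coe.2 (Finset.mem_image_of_mem _ hi)⟩

theorem exists_int_bounds {α : Type} (G : Finset (ℤ × α)) :
    ∃ a b : ℤ, ∀ p ∈ G, a ≤ p.1 ∧ p.1 ≤ b := by
  classical
  obtain ⟨a, ha⟩ := (G.image Prod.fst).bddBelow
  obtain ⟨b, hb⟩ := (G.image Prod.fst).bddAbove
  exact ⟨a, b, fun p hp => ⟨ha (Finset.mem_coe.2 (Finset.mem_image_of_mem _ hp)),
    hb (Finset.mem_coe.2 (Finset.mem_image_of_mem _ hp))⟩⟩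

/-- A map out of a finitely generated graded module is determined in bounded degrees. -/
theorem exists_gen_bound (M : GMod A) : ∃ hi : ℤ, ∀ (N : GMod A)
    (f : M.carrier →ₗ[A.carrier] N.carrier) (W : Submodule A.carrier N.carrier),
    (∀ i ≤ hi, ∀ x ∈ M.grading i, f x ∈ W) → LinearMap.range f ≤ W := by
  obtain ⟨G, hG, hs⟩ := exists_hom_gens M
  obtain ⟨a, b, hab⟩ := exists_int_bounds G
  refine ⟨b, fun N f W h => ?_⟩
  rw [LinearMap.range_eq_map, Submodule.map_le_iff_le_comap, ← hs, Submodule.span_le]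
  rintro _ ⟨p, hp, rfl⟩
  exact h p.1 (hab p hp).2 p.2 (hG p hp)

/-- A component of `M` is the sum of the translates of the homogeneous generators by the
corresponding components of `A`. -/
theorem grading_le_gens {M : GMod A} {G : Finset (ℤ × M.carrier)}
    (hG : ∀ p ∈ G, p.2 ∈ M.grading p.1)
    (hs : Submodule.span A.carrier (Prod.snd '' (G : Set (ℤ × M.carrier))) = ⊤) (i : ℤ) :
    M.grading i ≤ ⨆ p : G, (A.grading (i - p.1.1)).map
      ((LinearMap.toSpanSingleton A.carrier M.carrier p.1.2).restrictScalars k) := by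
  have key : ∀ y : M.carrier, M.pr i y ∈ ⨆ p : G, (A.grading (i - p.1.1)).map
      ((LinearMap.toSpanSingleton A.carrier M.carrier p.1.2).restrictScalars k) := by
    intro y
    have hy : y ∈ Submodule.span A.carrier (Prod.snd '' (G : Set (ℤ × M.carrier))) := by
      rw [hs]; trivial
    induction hy using Submodule.closure_induction with
    | zero => simp
    | add x y _ _ hx hy => rw [map_add]; exact Submodule.add_mem _ hx hy
    | smul_mem b x hx =>
      obtain ⟨p, hp, rfl⟩ := hx
      rw [pr_smul (hG p hp)]
      exact Submodule.mem_iSup_of_mem ⟨p, hp⟩ ⟨_, gpr_mem A.internal _ b, rfl⟩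
  intro y hy
  rw [← gpr_self M.internal i hy]
  exact key y

theorem exists_bdd_below (hA : A.Laurentian) (M : GMod A) :
    ∃ lo : ℤ, ∀ i < lo, M.grading i = ⊥ := by
  obtain ⟨G, hG, hs⟩ := exists_hom_gens M
  obtain ⟨a, b, hab⟩ := exists_int_bounds G
  obtain ⟨N, hN⟩ := hA.1
  refine ⟨N + a, fun i hi => ?_⟩
  rw [eq_bot_iff]
  refine (grading_le_gens hG hs i).trans (iSup_le fun p => ?_)
  have := (hab p p.2).1
  rw [hN _ (by omega), Submodule.map_bot]

theorem grading_finite (hA : A.Laurentian) (M : GMod A) (i : ℤ) :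
    FiniteDimensional k (M.grading i) := by
  obtain ⟨G, hG, hs⟩ := exists_hom_gens M
  have := hA.2
  have := fun p : G => (inferInstance : FiniteDimensional k ((A.grading (i - p.1.1)).map
      ((LinearMap.toSpanSingleton A.carrier M.carrier p.1.2).restrictScalars k)))
  exact Submodule.finiteDimensional_of_le (grading_le_gens hG hs i)

theorem grading_le_finite (hA : A.Laurentian) (M : GMod A) (e : ℤ) :
    FiniteDimensional k (⨆ i : Set.Iic e, M.grading i : Submodule k M.carrier) := by
  obtain ⟨lo, hlo⟩ := exists_bdd_below hA M
  have := grading_finite hA M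
  refine Submodule.finiteDimensional_of_le
    (S₂ := (⨆ i : Set.Icc lo e, M.grading i : Submodule k M.carrier)) (iSup_le fun i => ?_)
  by_cases h : i.1 < lo
  · rw [hlo _ h]; exact bot_le
  · exact le_iSup (fun i : Set.Icc lo e => M.grading i) ⟨i.1, not_lt.1 h, i.2⟩

theorem isGSub_span {M : GMod A} {i : ℤ} {x : M.carrier} (hx : x ∈ M.grading i) :
    M.IsGSub (Submodule.span A.carrier {x}) := by
  rw [GMod.isGSub_iff]
  intro y hy j
  obtain ⟨a, rfl⟩ := Submodule.mem_span_singleton.1 hy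
  rw [pr_smul hx]
  exact Submodule.smul_mem _ _ (Submodule.mem_span_singleton_self x)

theorem exists_hom_ne_zero {M : GMod A} {x : M.carrier} (hx : x ≠ 0) : ∃ i, M.pr i x ≠ 0 := by
  by_contra! h
  exact hx (gpr_ext M.internal fun i => by rw [h i, map_zero])

/-- Graded-simple modules over a Laurentian algebra are bounded above: a homogeneous vector
in degree `m` generates a fixed homogeneous vector in degree `n`, so that `A` is nonzero in
degree `n - m`. -/
theorem simple_bdd_above (hA : A.Laurentian) {L : GMod A} (hL : IsGSimple L) :
    ∃ hi : ℤ, ∀ i > hi, L.grading i = ⊥ := by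
  obtain ⟨N, hN⟩ := hA.1
  have := hL.1
  obtain ⟨v', hv'⟩ := exists_ne (0 : L.carrier)
  obtain ⟨n, hv⟩ := exists_hom_ne_zero hv'
  refine ⟨n - N, fun m hm => ?_⟩
  rw [eq_bot_iff]
  intro w hw
  by_contra hw0
  rcases hL.2 _ (isGSub_span hw) with h | h
  · exact hw0 (Submodule.span_singleton_eq_bot.1 h)
  · have hmem : L.pr n v' ∈ Submodule.span A.carrier {w} := by rw [h]; trivial
    obtain ⟨a, ha⟩ := Submodule.mem_span_singleton.1 hmem
    have h1 := pr_smul hw n a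
    rw [ha, GMod.pr, gpr_self L.internal n (gpr_mem L.internal n v')] at h1
    have h2 := gpr_mem A.internal (n - m) a
    rw [hN _ (by omega), Submodule.mem_bot] at h2
    rw [h2, zero_smul] at h1
    exact hv h1

end Finiteness

/-! ### Lifting, factorisation, and vanishing of `ext¹` as an extension property -/

section Lifting

/-- Factorisation of homogeneous maps through a homogeneous injection. -/
theorem ghom_factor_inj {M N Q : GMod A} {d e : ℤ} {f : N.carrier →ₗ[A.carrier] Q.carrier}
    (hf : f ∈ ghomSet N Q d) (hinj : Function.Injective f)
    {u : M.carrier →ₗ[A.carrier] Q.carrier} (hu : u ∈ ghomSet M Q e)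
    (hr : LinearMap.range u ≤ LinearMap.range f) :
    ∃ v ∈ ghomSet M N (e - d), f ∘ₗ v = u := by
  let v : M.carrier →ₗ[A.carrier] N.carrier :=
    (LinearEquiv.ofInjective f hinj).symm.toLinearMap ∘ₗ
      u.codRestrict (LinearMap.range f) (fun x => hr ⟨x, rfl⟩)
  have hv : ∀ x, f (v x) = u x := by
    intro x
    have := congrArg Subtype.val ((LinearEquiv.ofInjective f hinj).apply_symm_apply
      (u.codRestrict (LinearMap.range f) (fun x => hr ⟨x, rfl⟩) x))
    exact this
  refine ⟨v, fun i x hx => ?_, LinearMap.ext hv⟩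
  refine ghom_reflect hf hinj ?_
  rw [hv, show i + (e - d) + d = i + e by ring]
  exact hu i x hx

variable [IsNoetherianRing A.carrier]

/-- Lifting of homogeneous maps out of a projective module. -/
theorem proj_lift {P M N : GMod A} (hP : GProjective P) {d e : ℤ}
    {f : P.carrier →ₗ[A.carrier] M.carrier} (hf : f ∈ ghomSet P M d)
    {g : N.carrier →ₗ[A.carrier] M.carrier} (hg : g ∈ ghomSet N M e)
    (hr : LinearMap.range f ≤ LinearMap.range g) :
    ∃ l ∈ ghomSet P N (d - e), g ∘ₗ l = f := by
  let R := GMod.sub M (LinearMap.range g) (ghom_range hg)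
  let g' : GMod.shift (e - d) N ⟶ GMod.shift (-d) R := ⟨g.rangeRestrict, fun i x hx => by
    have := hg _ x hx
    change g x ∈ M.grading (i - -d)
    rwa [show i - -d = i - (e - d) + e by ring]⟩
  let f' : P ⟶ GMod.shift (-d) R := ⟨f.codRestrict (LinearMap.range g) (fun x => hr ⟨x, rfl⟩),
    fun i x hx => by
      have := hf _ x hx
      change f x ∈ M.grading (i - -d)
      rwa [show i - -d = i + d by ring]⟩
  obtain ⟨l, hl⟩ := hP _ _ g' f' g.surjective_rangeRestrict
  refine ⟨l.1, fun i x hx => ?_, ?_⟩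
  · have := l.2 i x hx
    change l.1 x ∈ N.grading (i - (e - d)) at this
    rwa [show i + (d - e) = i - (e - d) by ring]
  · ext x
    have h1 : (l ≫ g').1 x = f'.1 x := by rw [hl]
    exact congrArg Subtype.val h1

omit [IsNoetherianRing A.carrier] in
theorem quot_mk_ghom (M : GMod A) {W : Submodule A.carrier M.carrier} (hW : M.IsGSub W) :
    (W.mkQ : M.carrier →ₗ[A.carrier] (M.quot W hW).carrier) ∈ ghomSet M (M.quot W hW) 0 :=
  fun i x hx => ⟨x, by rwa [add_zero], rfl⟩

theorem sub_incl_ghom (M : GMod A) {W : Submodule A.carrier M.carrier} (hW : M.IsGSub W) :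
    (W.subtype : (M.sub W hW).carrier →ₗ[A.carrier] M.carrier) ∈ ghomSet (M.sub W hW) M 0 :=
  fun i x hx => by rw [add_zero]; exact hx

/-- A map from a projective module into a sum of two graded submodules is a sum of two maps. -/
theorem proj_split {P M : GMod A} (hP : GProjective P) {d : ℤ}
    {f : P.carrier →ₗ[A.carrier] M.carrier} (hf : f ∈ ghomSet P M d)
    {W₁ W₂ : Submodule A.carrier M.carrier} (h₁ : M.IsGSub W₁) (h₂ : M.IsGSub W₂)
    (hr : LinearMap.range f ≤ W₁ ⊔ W₂) :
    ∃ f₂ ∈ ghomSet P M d, LinearMap.range f₂ ≤ W₂ ∧ LinearMap.range (f - f₂) ≤ W₁ := by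
  let mk : M.carrier →ₗ[A.carrier] (M.quot W₁ h₁).carrier := W₁.mkQ
  have hmk := quot_mk_ghom M h₁
  let inc : (M.sub W₂ h₂).carrier →ₗ[A.carrier] M.carrier := W₂.subtype
  have hinc := sub_incl_ghom M h₂
  obtain ⟨l, hl, hl'⟩ := proj_lift hP (ghom_comp hmk hf) (ghom_comp hmk hinc) (by
    rintro _ ⟨x, rfl⟩
    obtain ⟨a, ha, b, hb, hab⟩ := Submodule.mem_sup.1 (hr ⟨x, rfl⟩)
    refine ⟨⟨b, hb⟩, ?_⟩
    change W₁.mkQ b = W₁.mkQ (f x)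
    rw [← hab, map_add, (Submodule.Quotient.mk_eq_zero W₁).2 ha |> fun h => (h : W₁.mkQ a = 0),
      zero_add])
  refine ⟨inc ∘ₗ l, by simpa using ghom_comp hinc hl, ?_, ?_⟩
  · rintro _ ⟨x, rfl⟩
    exact (l x).2
  · rintro _ ⟨x, rfl⟩
    have := LinearMap.congr_fun hl' x
    exact (Submodule.Quotient.eq W₁).1 this.symm

/-- If all homogeneous maps of degree `d` from a projective module to the members of a family
of graded submodules land in `Q`, then so do those to the sum of the family. -/
theorem proj_sSup {P M : GMod A} (hP : GProjective P) {d : ℤ}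
    {𝒮 : Set (Submodule A.carrier M.carrier)} (h𝒮 : ∀ R ∈ 𝒮, M.IsGSub R)
    {Q : Submodule A.carrier M.carrier}
    (hQ : ∀ R ∈ 𝒮, ∀ f ∈ ghomSet P M d, LinearMap.range f ≤ R → LinearMap.range f ≤ Q)
    {f : P.carrier →ₗ[A.carrier] M.carrier} (hf : f ∈ ghomSet P M d)
    (hr : LinearMap.range f ≤ sSup 𝒮) : LinearMap.range f ≤ Q := by
  have := M.fg
  let 𝒬 : Set (Submodule A.carrier M.carrier) := {R | M.IsGSub R ∧
    ∀ f ∈ ghomSet P M d, LinearMap.range f ≤ R → LinearMap.range f ≤ Q}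
  obtain ⟨R₀, hR₀, hmax⟩ := WellFounded.has_min (wellFounded_gt (α := Submodule A.carrier M.carrier))
    𝒬 ⟨⊥, M.isGSub_bot, fun f _ h => h.trans bot_le⟩
  refine hR₀.2 f hf (hr.trans (sSup_le fun R hR => ?_))
  have hmem : R₀ ⊔ R ∈ 𝒬 := by
    refine ⟨hR₀.1.sup (h𝒮 R hR), fun f hf hr => ?_⟩
    obtain ⟨f₂, hf₂, h2, h1⟩ := proj_split hP hf hR₀.1 (h𝒮 R hR) hr
    have e2 := hQ R hR f₂ hf₂ h2
    have e1 := hR₀.2 _ (ghom_sub hf hf₂) h1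
    rintro _ ⟨x, rfl⟩
    have := Q.add_mem (e1 ⟨x, rfl⟩) (e2 ⟨x, rfl⟩)
    simpa using this
  have : ¬ R₀ < R₀ ⊔ R := hmax _ hmem
  by_contra hle
  exact this (left_lt_sup.2 hle)

/-- Every homogeneous map into `T` defined on the kernel of a homogeneous surjection onto
(a shift of) `U` extends: the form in which the vanishing of `ext¹(U, T)` is used. -/
def ExtProp (U T : GMod A) : Prop :=
  ∀ (d : ℤ) (X : GMod A) (q : X.carrier →ₗ[A.carrier] U.carrier), q ∈ ghomSet X U d →
    Function.Surjective q → ∀ (n : ℤ) (v : LinearMap.ker q →ₗ[A.carrier] T.carrier),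
      (∀ (i : ℤ) (x : LinearMap.ker q), (x : X.carrier) ∈ X.grading i → v x ∈ T.grading (i + n)) →
      ∃ v' ∈ ghomSet X T n, ∀ x : LinearMap.ker q, v' x = v x

omit [IsNoetherianRing A.carrier] in
theorem exists_dsum (M N : GMod A) :
    ∃ (D : GMod A) (i₁ : M.carrier →ₗ[A.carrier] D.carrier)
      (i₂ : N.carrier →ₗ[A.carrier] D.carrier) (p₁ : D.carrier →ₗ[A.carrier] M.carrier)
      (p₂ : D.carrier →ₗ[A.carrier] N.carrier),
      i₁ ∈ ghomSet M D 0 ∧ i₂ ∈ ghomSet N D 0 ∧ p₁ ∈ ghomSet D M 0 ∧ p₂ ∈ ghomSet D N 0 ∧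
      (∀ x, p₁ (i₁ x) = x) ∧ (∀ x, p₂ (i₂ x) = x) ∧ (∀ x, p₁ (i₂ x) = 0) ∧
      (∀ x, p₂ (i₁ x) = 0) ∧ ∀ y, i₁ (p₁ y) + i₂ (p₂ y) = y := by
  refine ⟨GMod.dsum M N, LinearMap.inl A.carrier M.carrier N.carrier,
    LinearMap.inr A.carrier M.carrier N.carrier, LinearMap.fst A.carrier M.carrier N.carrier,
    LinearMap.snd A.carrier M.carrier N.carrier, ?_, ?_, ?_, ?_,
    fun x => rfl, fun x => rfl, fun x => rfl, fun x => rfl,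
    fun y => Prod.ext (add_zero _) (zero_add _)⟩
  · intro i x hx
    rw [add_zero]; exact ⟨hx, Submodule.zero_mem _⟩
  · intro i x hx
    rw [add_zero]; exact ⟨Submodule.zero_mem _, hx⟩
  · intro i x hx
    rw [add_zero]; exact hx.1
  · intro i x hx
    rw [add_zero]; exact hx.2

omit [IsNoetherianRing A.carrier] in
theorem exists_quot {D U : GMod A} {d : ℤ} {R : Submodule A.carrier D.carrier} (hR : D.IsGSub R)
    {g₀ : D.carrier →ₗ[A.carrier] U.carrier} (hg₀ : g₀ ∈ ghomSet D U d)
    (hle : R ≤ LinearMap.ker g₀) :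
    ∃ (E : GMod A) (mk : D.carrier →ₗ[A.carrier] E.carrier)
      (g : E.carrier →ₗ[A.carrier] U.carrier),
      mk ∈ ghomSet D E 0 ∧ g ∈ ghomSet E U d ∧ Function.Surjective mk ∧
      (∀ y, g (mk y) = g₀ y) ∧ ∀ y, mk y = 0 ↔ y ∈ R := by
  refine ⟨GMod.quot D R hR, R.mkQ, R.liftQ g₀ hle, quot_mk_ghom D hR, ?_, R.mkQ_surjective,
    fun y => rfl, fun y => Submodule.Quotient.mk_eq_zero R⟩
  rintro i _ ⟨y, hy, rfl⟩
  exact hg₀ i y hy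

/-- The pushout of `0 → ker q → X → U → 0` along `v : ker q → T`. -/
theorem exists_pushout {U T : GMod A} {d : ℤ} {X : GMod A}
    {q : X.carrier →ₗ[A.carrier] U.carrier} (hq : q ∈ ghomSet X U d)
    (v : LinearMap.ker q →ₗ[A.carrier] T.carrier)
    (hv : ∀ (i : ℤ) (x : LinearMap.ker q), (x : X.carrier) ∈ X.grading i → v x ∈ T.grading i) :
    ∃ (E : GMod A) (f : T.carrier →ₗ[A.carrier] E.carrier)
      (u : X.carrier →ₗ[A.carrier] E.carrier) (g : E.carrier →ₗ[A.carrier] U.carrier),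
      f ∈ ghomSet T E 0 ∧ u ∈ ghomSet X E 0 ∧ g ∈ ghomSet E U d ∧ Function.Injective f ∧
      (∀ x : LinearMap.ker q, f (v x) = u x) ∧ (∀ x, g (u x) = q x) ∧ (∀ t, g (f t) = 0) ∧
      ∀ y, g y = 0 → ∃ t, f t = y := by
  obtain ⟨D, i₁, i₂, p₁, p₂, hi₁, hi₂, hp₁, hp₂, h11, h22, h12, h21, hsum⟩ := exists_dsum T X
  have hR : D.IsGSub (LinearMap.range (i₁ ∘ₗ v - i₂ ∘ₗ (LinearMap.ker q).subtype)) := by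
    refine ghom_range (M := GMod.sub X (LinearMap.ker q) (ghom_ker hq)) (d := 0) ?_
    intro i x hx
    exact (D.grading _).sub_mem (hi₁ i _ (hv i x hx)) (hi₂ i _ hx)
  obtain ⟨E, mk, g, hmk, hg, hmks, hgm, hmk0⟩ := exists_quot hR
    (g₀ := q ∘ₗ p₂) (d := d) (by simpa using ghom_comp hq hp₂) (by
      rintro _ ⟨x, rfl⟩
      simp [h21, h22])
  refine ⟨E, mk ∘ₗ i₁, mk ∘ₗ i₂, g, ghom_comp hmk hi₁, ghom_comp hmk hi₂, hg, ?_, ?_, ?_, ?_, ?_⟩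
  · rw [injective_iff_map_eq_zero]
    intro t ht
    obtain ⟨x, hx⟩ := (hmk0 _).1 ht
    have h1 := congrArg p₁ hx
    have h2 := congrArg p₂ hx
    simp only [LinearMap.sub_apply, LinearMap.comp_apply, map_sub, h11, h12, h21, h22, sub_zero,
      zero_sub, Submodule.subtype_apply, neg_eq_zero] at h1 h2
    have hx0 : x = 0 := Subtype.ext h2
    rw [← h1, hx0, map_zero]
  · intro x
    rw [← sub_eq_zero, LinearMap.comp_apply, LinearMap.comp_apply, ← map_sub, hmk0]
    exact ⟨x, rfl⟩
  · intro x
    simp [hgm, h22]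
  · intro t
    simp [hgm, h21]
  · intro y hy
    obtain ⟨z, rfl⟩ := hmks y
    have hx : q (p₂ z) = 0 := by rw [hgm] at hy; exact hy
    obtain ⟨w, hw⟩ : ∃ w : LinearMap.ker q, (w : X.carrier) = p₂ z := ⟨⟨p₂ z, hx⟩, rfl⟩
    refine ⟨p₁ z + v w, ?_⟩
    rw [← sub_eq_zero, LinearMap.comp_apply, ← map_sub, hmk0]
    refine ⟨w, ?_⟩
    have e := hsum z
    simp only [LinearMap.sub_apply, LinearMap.comp_apply, map_add, Submodule.subtype_apply, hw]
    generalize i₁ (p₁ z) = a at *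
    generalize i₂ (p₂ z) = b at *
    rw [← e]
    abel

/-- `ext¹(U, T) = 0` lets a degree-preserving map from the kernel of `q : X → U` to `T` extend to
`X`: a splitting of the pushout extension corrects the map from `X` to the pushout. -/
theorem ext1_extend {U T : GMod A} (h : Ext1Vanish U T) {d : ℤ} {X : GMod A}
    {q : X.carrier →ₗ[A.carrier] U.carrier} (hq : q ∈ ghomSet X U d)
    (hs : Function.Surjective q) (v : LinearMap.ker q →ₗ[A.carrier] T.carrier)
    (hv : ∀ (i : ℤ) (x : LinearMap.ker q), (x : X.carrier) ∈ X.grading i → v x ∈ T.grading i) :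
    ∃ v' ∈ ghomSet X T 0, ∀ x : LinearMap.ker q, v' x = v x := by
  obtain ⟨E, f, u, g, hf, hu, hg, hfi, hfv, hgu, hgf, hker⟩ := exists_pushout hq v hv
  let F : T ⟶ E := ⟨f, fun i x hx => by simpa using hf i x hx⟩
  let Gm : E ⟶ GMod.shift (-d) U := ⟨g, fun i y hy => by
    change g y ∈ U.grading (i - -d)
    rw [sub_neg_eq_add]
    exact hg i y hy⟩
  obtain ⟨s, hs'⟩ := h (-d) E F Gm hfi
    (fun y => by obtain ⟨x, rfl⟩ := hs y; exact ⟨u x, hgu x⟩)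
    (by
      ext y
      constructor
      · rintro ⟨t, rfl⟩
        exact hgf t
      · exact fun hy => hker y hy)
  let sl : U.carrier →ₗ[A.carrier] E.carrier := s.1
  have hs2 : ∀ y : U.carrier, g (sl y) = y := fun y =>
    LinearMap.congr_fun (congrArg Subtype.val hs') y
  have hsl : sl ∈ ghomSet U E (-d) := fun i x hx => by
    refine s.2 (i + -d) x ?_
    change x ∈ U.grading (i + -d - -d)
    rwa [add_sub_cancel_right]
  obtain ⟨v', hv', hv''⟩ := ghom_factor_inj hf hfi (u := u - sl ∘ₗ q)
    (ghom_sub hu (by simpa using ghom_comp hsl hq)) (by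
      rintro _ ⟨x, rfl⟩
      refine hker _ ?_
      simp only [LinearMap.sub_apply, LinearMap.comp_apply, map_sub]
      rw [hs2, hgu, sub_self])
  refine ⟨v', hv', fun x => hfi ?_⟩
  have := LinearMap.congr_fun hv'' x
  simp only [LinearMap.sub_apply, LinearMap.comp_apply] at this
  rw [this, LinearMap.mem_ker.1 x.2, map_zero, sub_zero]
  exact (hfv x).symm

/-- The extension property in all degrees, deduced from the degree-preserving case by shifting `X`. -/
theorem extProp_of_ext1 {U T : GMod A} (h : Ext1Vanish U T) : ExtProp U T := by
  intro d X q hq hs n v hv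
  obtain ⟨v', hv', he⟩ := ext1_extend h (X := GMod.shift n X) (d := d - n) (q := q)
    (fun i x hx => by
      have := hq _ x hx
      rwa [show i + (d - n) = i - n + d by ring]) hs v
    (fun i x hx => by
      have := hv _ x hx
      rwa [sub_add_cancel] at this)
  refine ⟨v', fun i x hx => ?_, he⟩
  have := hv' (i + n) x (by change x ∈ X.grading (i + n - n); rwa [add_sub_cancel_right])
  rwa [add_zero] at this

end Lifting

/-! ### Standard modules and socles of proper costandard modules -/

section Standard

variable [IsNoetherianRing A.carrier]

/-- A graded submodule, as an injective homogeneous map. -/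
theorem exists_sub (M : GMod A) {W : Submodule A.carrier M.carrier} (hW : M.IsGSub W) :
    ∃ (X : GMod A) (inc : X.carrier →ₗ[A.carrier] M.carrier),
      inc ∈ ghomSet X M 0 ∧ Function.Injective inc ∧ LinearMap.range inc = W :=
  ⟨GMod.sub M W hW, W.subtype, sub_incl_ghom M hW, W.subtype_injective, W.range_subtype⟩

/-- An isomorphism `W/W' ≅ N`, expressed through a homogeneous surjection from `W`. -/
theorem sqIso_map {M N : GMod A} {W W' : Submodule A.carrier M.carrier} (hW : M.IsGSub W)
    (h : SQIso M W W' N) :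
    ∃ (X : GMod A) (inc : X.carrier →ₗ[A.carrier] M.carrier)
      (q : X.carrier →ₗ[A.carrier] N.carrier),
      inc ∈ ghomSet X M 0 ∧ Function.Injective inc ∧ LinearMap.range inc = W ∧
      q ∈ ghomSet X N 0 ∧ Function.Surjective q ∧ ∀ x, q x = 0 ↔ inc x ∈ W' := by
  have key : ∃ q : W →ₗ[A.carrier] N.carrier,
      (∀ (i : ℤ) (x : W), (x : M.carrier) ∈ M.grading i → q x ∈ N.grading (i + 0)) ∧
      Function.Surjective q ∧ ∀ x : W, q x = 0 ↔ W.subtype x ∈ W' := by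
    obtain ⟨e, he⟩ := h
    refine ⟨(e : sqMod M W W' →ₗ[A.carrier] N.carrier) ∘ₗ (W'.comap W.subtype).mkQ, ?_, ?_, ?_⟩
    · intro i x hx
      rw [add_zero, ← he i]
      exact ⟨_, ⟨x, hx, rfl⟩, rfl⟩
    · exact e.surjective.comp (Submodule.mkQ_surjective _)
    · intro x
      simp
  obtain ⟨q, hq, hqs, hqk⟩ := key
  exact ⟨GMod.sub M W hW, W.subtype, q, sub_incl_ghom M hW, W.subtype_injective,
    W.range_subtype, hq, hqs, hqk⟩

variable (S : AHW A Idx)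

/-- `hom(P(σ), Δ(τ)) = 0` unless `σ ≤ τ`: such a map lifts to `P(τ)`, where its image is killed by
the definition of `Δ(τ)`. -/
theorem std_hom_zero {σ τ : Idx} (h : ¬ σ ≤ τ) (hP : GProjective (S.P σ))
    {d : ℤ}
    {f : (S.P σ).carrier →ₗ[A.carrier] (S.Δ τ).carrier} (hf : f ∈ ghomSet (S.P σ) (S.Δ τ) d) :
    f = 0 := by
  obtain ⟨dm, hs, hk⟩ := S.std_def τ
  have hdm : dm.1 ∈ ghomSet (S.P τ) (S.Δ τ) 0 := fun i x hx => by
    rw [add_zero]; exact dm.2 i x hx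
  obtain ⟨l, hl, rfl⟩ := proj_lift hP hf hdm
    (by rw [LinearMap.range_eq_top.2 hs]; exact le_top)
  have : LinearMap.range l ≤ LinearMap.ker dm.1 := by
    rw [hk]
    refine le_trans ?_ (le_iSup _ (⟨σ, l⟩ : Σ σ : Idx, (S.P σ).carrier →ₗ[A.carrier] _))
    exact le_trans (le_iSup_of_le h le_rfl) (iSup_mono fun _ => le_iSup_of_le ⟨_, hl⟩ le_rfl)
  ext x
  exact this ⟨x, rfl⟩

/-- The filtration of a projective cover by standard modules, expressed through homogeneous
surjections from its terms. -/
theorem std_filt (τ : Idx) : ∃ F : ℕ → Submodule A.carrier (S.P τ).carrier,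
    F 0 = ⊤ ∧ (∃ N, F N = ⊥) ∧ (∀ n, (S.P τ).IsGSub (F n)) ∧ (∀ n, F (n + 1) ≤ F n) ∧
    ∀ n, F n ≤ F (n + 1) ∨ ∃ σ, (n = 0 → σ = τ) ∧ (1 ≤ n → τ < σ) ∧
      ∃ (X : GMod A) (inc : X.carrier →ₗ[A.carrier] (S.P τ).carrier) (d : ℤ)
        (q : X.carrier →ₗ[A.carrier] (S.Δ σ).carrier),
        inc ∈ ghomSet X (S.P τ) 0 ∧ Function.Injective inc ∧ LinearMap.range inc = F n ∧
        q ∈ ghomSet X (S.Δ σ) d ∧ Function.Surjective q ∧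
        ∀ x, q x = 0 ↔ inc x ∈ F (n + 1) := by
  obtain ⟨Φ, hN, h0, h1⟩ := S.ker_filt τ
  refine ⟨Φ.F, Φ.first, hN, Φ.graded, Φ.anti, fun n => ?_⟩
  rcases Nat.eq_zero_or_pos n with rfl | hn
  · obtain ⟨X, inc, q, hi, hii, hir, hq, hs, hk⟩ := sqIso_map (Φ.graded 0) h0
    exact Or.inr ⟨τ, fun _ => rfl, fun h => absurd h (by omega), X, inc, 0, q, hi, hii, hir,
      hq, hs, hk⟩
  · rcases h1 n hn with h | ⟨σ, hσ, d, h⟩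
    · left
      intro x hx
      have := Subsingleton.elim
        ((Submodule.comap (Φ.F n).subtype (Φ.F (n + 1))).mkQ ⟨x, hx⟩) 0
      simpa using this
    · obtain ⟨X, inc, q, hi, hii, hir, hq, hs, hk⟩ := sqIso_map (Φ.graded n) h
      refine Or.inr ⟨σ, fun h => absurd h (by omega), fun _ => hσ, X, inc, -d, q, hi, hii, hir,
        fun i x hx => ?_, hs, hk⟩
      have := hq i x hx
      rw [add_zero] at this
      exact this

/-- The projection `P(τ) → Δ(τ)`; its kernel is the sum of the images of the
homogeneous maps from `P(ρ)` with `ρ > τ`. -/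
theorem exists_std (τ : Idx) : ∃ q : (S.P τ).carrier →ₗ[A.carrier] (S.Δ τ).carrier,
    q ∈ ghomSet (S.P τ) (S.Δ τ) 0 ∧ Function.Surjective q ∧
    LinearMap.ker q ≤ sSup {R | ∃ ρ, τ < ρ ∧ ∃ d, ∃ h ∈ ghomSet (S.P ρ) (S.P τ) d,
      R = LinearMap.range h} := by
  choose dm hs hk using S.std_def
  have hdm : ∀ τ, (dm τ).1 ∈ ghomSet (S.P τ) (S.Δ τ) 0 := fun τ i x hx => by
    rw [add_zero]; exact (dm τ).2 i x hx
  refine ⟨(dm τ).1, hdm τ, hs τ, ?_⟩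
  obtain ⟨F, h0, ⟨N, hN⟩, hgr, hanti, hstep⟩ := std_filt S τ
  have key : ∀ m n, 1 ≤ n → n + m = N + 1 → F n ≤ sSup {R | ∃ ρ, τ < ρ ∧ ∃ d,
      ∃ h ∈ ghomSet (S.P ρ) (S.P τ) d, R = LinearMap.range h} := by
    intro m
    induction m with
    | zero =>
      rintro n - hn
      rw [show n = N + 1 by omega]
      refine (hanti N).trans ?_
      rw [hN]; exact bot_le
    | succ m ih =>
      intro n hn hnm
      have ih' := ih (n + 1) (by omega) (by omega)
      rcases hstep n with h | ⟨σ, -, hσ, X, inc, d, q, hi, hii, hir, hq, hqs, hqk⟩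
      · exact h.trans ih'
      · obtain ⟨l, hl, hl'⟩ := proj_lift (S.proj σ) (hdm σ) hq
          (by rw [LinearMap.range_eq_top.2 hqs]; exact le_top)
        have hl2 := ghom_comp hi hl
        rw [← hir]
        rintro _ ⟨x, rfl⟩
        obtain ⟨y, hy⟩ := hs σ (q x)
        have h1 : q (l y) = (dm σ).1 y := LinearMap.congr_fun hl' y
        have h2 : q (x - l y) = 0 := by rw [map_sub, h1, hy, sub_self]
        have h3 := ih' ((hqk _).1 h2)
        have h4 : LinearMap.range (inc ∘ₗ l) ≤ sSup {R | ∃ ρ, τ < ρ ∧ ∃ d,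
            ∃ h ∈ ghomSet (S.P ρ) (S.P τ) d, R = LinearMap.range h} :=
          le_sSup ⟨σ, hσ hn, _, _, hl2, rfl⟩
        have := Submodule.add_mem _ h3 (h4 ⟨y, rfl⟩)
        simpa using this
  -- It remains to see that `ker (P(τ) → Δ(τ))` is contained in the term `F 1`, using that all maps
  -- `P(ρ) → Δ(τ)` with `ρ ≰ τ` vanish.
  refine le_trans ?_ (key N 1 le_rfl (by omega))
  rw [hk τ]
  refine iSup_le fun p => iSup_le fun hp => iSup_le fun ⟨d, hd⟩ => ?_
  rcases hstep 0 with h | ⟨σ, hσ, -, X, inc, e, q, hi, hii, hir, hq, hqs, hqk⟩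
  · rw [h0] at h
    exact le_top.trans h
  · obtain rfl := hσ rfl
    rintro _ ⟨x, rfl⟩
    obtain ⟨l, hl, hl'⟩ := ghom_factor_inj hi hii hd (by rw [hir, h0]; exact le_top)
    have hz := std_hom_zero S hp (S.proj p.1) (ghom_comp hq hl)
    rw [← hl']
    exact (hqk (l x)).1 (LinearMap.congr_fun hz x)

/-- The projection `P(τ) → Δ(τ)`. -/
noncomputable def AHW.qm (τ : Idx) : (S.P τ).carrier →ₗ[A.carrier] (S.Δ τ).carrier :=
  (exists_std S τ).choose

theorem AHW.qm_ghom (τ : Idx) : S.qm τ ∈ ghomSet (S.P τ) (S.Δ τ) 0 :=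
  (exists_std S τ).choose_spec.1

theorem AHW.qm_surj (τ : Idx) : Function.Surjective (S.qm τ) :=
  (exists_std S τ).choose_spec.2.1

theorem AHW.qm_ker (τ : Idx) : LinearMap.ker (S.qm τ) ≤
    sSup {R | ∃ ρ, τ < ρ ∧ ∃ d, ∃ h ∈ ghomSet (S.P ρ) (S.P τ) d, R = LinearMap.range h} :=
  (exists_std S τ).choose_spec.2.2

/-- A homogeneous map kills (modulo `N`) the kernel of `P(τ) → Δ(τ)` as soon as `N` contains
the images of all homogeneous maps from `P(ρ)`, `ρ > τ`. -/
theorem AHW.qm_ker_map {τ : Idx} {M : GMod A} {d : ℤ}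
    {u : (S.P τ).carrier →ₗ[A.carrier] M.carrier} (hu : u ∈ ghomSet (S.P τ) M d)
    {N : Submodule A.carrier M.carrier}
    (h : ∀ ρ, τ < ρ → ∀ (e : ℤ), ∀ f ∈ ghomSet (S.P ρ) M e, LinearMap.range f ≤ N) :
    LinearMap.ker (S.qm τ) ≤ N.comap u := by
  refine (S.qm_ker τ).trans (sSup_le ?_)
  rintro _ ⟨ρ, hρ, e, f, hf, rfl⟩
  rintro _ ⟨x, rfl⟩
  exact h ρ hρ _ _ (ghom_comp hu hf) ⟨x, rfl⟩

/-- A proper graded submodule misses the image of some homogeneous map from some `P(τ)`. -/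
theorem AHW.exists_supp {M : GMod A} {N : Submodule A.carrier M.carrier} (hN : M.IsGSub N)
    (hne : N ≠ ⊤) : ∃ τ, ∃ d, ∃ u ∈ ghomSet (S.P τ) M d, ¬ LinearMap.range u ≤ N := by
  have := M.fg
  -- A maximal proper graded submodule `N' ⊇ N`; the simple quotient by it is covered by some `P(τ)`.
  obtain ⟨N', ⟨hN', hNN', hne'⟩, hmax⟩ := WellFounded.has_min
    (wellFounded_gt (α := Submodule A.carrier M.carrier))
    {R | M.IsGSub R ∧ N ≤ R ∧ R ≠ ⊤} ⟨N, hN, le_rfl, hne⟩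
  let Q := M.quot N' hN'
  let mk : M.carrier →ₗ[A.carrier] Q.carrier := N'.mkQ
  have hmk : mk ∈ ghomSet M Q 0 := quot_mk_ghom M hN'
  have hmks : Function.Surjective mk := N'.mkQ_surjective
  have hmk0 : ∀ x, mk x = 0 ↔ x ∈ N' := fun x => Submodule.Quotient.mk_eq_zero N'
  clear_value mk
  have hQ : IsGSimple Q := by
    constructor
    · obtain ⟨x, -, hx⟩ := SetLike.exists_of_lt (lt_top_iff_ne_top.2 hne')
      exact ⟨⟨mk x, 0, fun h => hx ((hmk0 x).1 h)⟩⟩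
    · intro W hW
      by_cases h : W.comap mk = ⊤
      · right
        rw [eq_top_iff]
        intro y _
        obtain ⟨x, rfl⟩ := hmks y
        have : x ∈ W.comap mk := by rw [h]; trivial
        exact this
      · left
        have hle : N' ≤ W.comap mk := fun x hx => by
          rw [Submodule.mem_comap, (hmk0 x).2 hx]; exact W.zero_mem
        have heq : N' = W.comap mk := by
          by_contra hlt
          exact hmax _ ⟨ghom_comap hmk hW, hNN'.trans hle, h⟩ (lt_of_le_of_ne hle hlt)
        rw [eq_bot_iff]
        intro y hy
        obtain ⟨x, rfl⟩ := hmks y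
        have : x ∈ W.comap mk := hy
        rw [← heq] at this
        exact (hmk0 x).2 this
  obtain ⟨π, d, ⟨e⟩⟩ := S.simple_complete Q hQ
  obtain ⟨p, hps, -⟩ := S.cover π
  have hp : p.1 ∈ ghomSet (S.P π) (S.L π) 0 := fun i x hx => by
    rw [add_zero]; exact p.2 i x hx
  let es : (S.L π).carrier →ₗ[A.carrier] Q.carrier := e.e.symm.toLinearMap
  have hes : es ∈ ghomSet (S.L π) Q d := fun i x hx => e.mem' (i + d) x (by
    change x ∈ (S.L π).grading (i + d - d)
    rwa [add_sub_cancel_right])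
  obtain ⟨l, hl, hl'⟩ := proj_lift (S.proj π) (ghom_comp hes hp) hmk
    (by rw [LinearMap.range_eq_top.2 hmks]; exact le_top)
  refine ⟨π, _, l, hl, fun hr => ?_⟩
  have := (S.simple π).1
  obtain ⟨y, hy⟩ := exists_ne (0 : (S.L π).carrier)
  obtain ⟨x, rfl⟩ := hps y
  have hinj : Function.Injective es := e.e.symm.injective
  refine hy (hinj ?_)
  rw [map_zero]
  have h1 : mk (l x) = es (p.1 x) := LinearMap.congr_fun hl' x
  rw [← h1, hmk0]
  exact hNN' (hr ⟨x, rfl⟩)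

/-- In `exists_supp`, the index `τ` can be chosen maximal; the map is then defined on `Δ(τ)`
modulo `N`. -/
theorem AHW.exists_maxSupp {M : GMod A} {N : Submodule A.carrier M.carrier} (hN : M.IsGSub N)
    (hne : N ≠ ⊤) : ∃ τ, ∃ d, ∃ u ∈ ghomSet (S.P τ) M d, ¬ LinearMap.range u ≤ N ∧
      LinearMap.ker (S.qm τ) ≤ N.comap u := by
  obtain ⟨τ, hτ⟩ := (Set.toFinite {τ | ∃ d, ∃ u ∈ ghomSet (S.P τ) M d,
    ¬ LinearMap.range u ≤ N}).exists_maximal (S.exists_supp hN hne)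
  obtain ⟨d, u, hu, hr⟩ := hτ.1
  refine ⟨τ, d, u, hu, hr, S.qm_ker_map hu fun ρ hρ e f hf => ?_⟩
  by_contra hfr
  exact absurd (hτ.2 ⟨e, f, hf, hfr⟩ hρ.le) (not_le_of_gt hρ)

/-- The map `Δ(σ) → ∇̄(σ)` spanning the space of all such homogeneous maps. -/
noncomputable def AHW.sm (S : AHW A Idx) (σ : Idx) :
    (S.Δ σ).carrier →ₗ[A.carrier] (S.pco σ).carrier :=
  (S.pco_hom σ).choose

omit [IsNoetherianRing A.carrier] in
theorem AHW.sm_ghom (σ : Idx) : S.sm σ ∈ ghomSet (S.Δ σ) (S.pco σ) 0 :=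
  (S.pco_hom σ).choose_spec.1

omit [IsNoetherianRing A.carrier] in
theorem AHW.sm_ne (σ : Idx) : S.sm σ ≠ 0 :=
  (S.pco_hom σ).choose_spec.2.1

omit [IsNoetherianRing A.carrier] in
/-- A nonzero homogeneous map `Δ(τ) → ∇̄(σ)` exists only for `τ = σ`, and is then a nonzero multiple
of `sm σ`. -/
theorem AHW.sm_smul {σ τ : Idx} {d : ℤ} {f : (S.Δ τ).carrier →ₗ[A.carrier] (S.pco σ).carrier}
    (hf : f ∈ ghomSet (S.Δ τ) (S.pco σ) d) (h0 : f ≠ 0) :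
    ∃ h : σ = τ, ∃ c : k, c ≠ 0 ∧ ∀ x, f x = c • S.sm σ (h ▸ x) := by
  have h : σ = τ := by
    by_contra hne
    exact h0 ((S.pco_hom σ).choose_spec.2.2.2 τ d f hf (Ne.symm hne))
  subst h
  obtain ⟨c, hc⟩ := (S.pco_hom σ).choose_spec.2.2.1 d f hf
  refine ⟨rfl, c, ?_, fun x => LinearMap.congr_fun hc x⟩
  rintro rfl
  exact h0 (by rw [hc, zero_smul])

/-- Every nonzero graded submodule of `∇̄(σ)` contains the image of `Δ(σ)`: it receives a nonzero
map from some standard module, which has to be a multiple of `sm σ`. -/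
theorem AHW.socle {σ : Idx} {Q : Submodule A.carrier (S.pco σ).carrier}
    (hQ : (S.pco σ).IsGSub Q) (hne : Q ≠ ⊥) : LinearMap.range (S.sm σ) ≤ Q := by
  obtain ⟨M, inc, hinc, hinj, hir⟩ := exists_sub (S.pco σ) hQ
  have hmem : ∀ y, inc y ∈ Q := fun y => hir ▸ ⟨y, rfl⟩
  have hbt : (⊥ : Submodule A.carrier M.carrier) ≠ ⊤ := by
    intro h
    apply hne
    rw [← hir, LinearMap.range_eq_map, ← h, Submodule.map_bot]
  obtain ⟨τ, d, u, hu, hr, hk⟩ := S.exists_maxSupp M.isGSub_bot hbt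
  obtain ⟨v, hv, rfl⟩ := ghom_factor (S.qm_ghom τ) (S.qm_surj τ) hu hk
  have hne' : inc ∘ₗ v ≠ 0 := by
    intro h
    refine hr ?_
    rintro _ ⟨x, rfl⟩
    refine (Submodule.mem_bot _).2 (hinj ?_)
    rw [map_zero]
    exact LinearMap.congr_fun h _
  obtain ⟨rfl, c, hc, h⟩ := S.sm_smul (ghom_comp hinc hv) hne'
  rintro _ ⟨x, rfl⟩
  have h1 : inc (v x) = c • S.sm σ x := h x
  have h2 : S.sm σ x = c⁻¹ • inc (v x) := by rw [h1, smul_smul, inv_mul_cancel₀ hc, one_smul]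
  rw [h2]
  exact Submodule.smul_of_tower_mem Q _ (hmem _)

omit [IsNoetherianRing A.carrier] in
/-- Homogeneous endomorphisms of `Δ(σ)` of nonpositive degree are scalars. -/
theorem AHW.end_std {σ : Idx} {j : ℤ} (hj : j ≤ 0)
    {φ : (S.Δ σ).carrier →ₗ[A.carrier] (S.Δ σ).carrier} (hφ : φ ∈ ghomSet (S.Δ σ) (S.Δ σ) j) :
    ∃ c : k, (j < 0 → c = 0) ∧ ∀ x, φ x = c • x := by
  classical
  obtain ⟨nv, dg, hdg, e, he, hX⟩ := S.end_poly σ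
  obtain ⟨p, hp⟩ := he.2 φ
  -- The degree of a monomial; it vanishes only for the constant monomial.
  let w : (Fin nv →₀ ℕ) → ℤ := fun m => ∑ i, (m i : ℤ) * dg i
  have hw0 : ∀ m, 0 ≤ w m := fun m => Finset.sum_nonneg fun i _ =>
    mul_nonneg (Int.natCast_nonneg _) (hdg i).le
  have hw1 : ∀ m, w m = 0 → m = 0 := by
    intro m hm
    ext i
    have := (Finset.sum_eq_zero_iff_of_nonneg (fun i _ =>
      mul_nonneg (Int.natCast_nonneg (m i)) (hdg i).le)).1 hm i (Finset.mem_univ i)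
    have h2 := (hdg i).ne'
    simpa [h2] using this
  have hmono : ∀ m, ∀ c : k, (e (MvPolynomial.monomial m c) :
      (S.Δ σ).carrier →ₗ[A.carrier] (S.Δ σ).carrier) ∈ ghomSet (S.Δ σ) (S.Δ σ) (w m) := by
    intro m
    induction m using Finsupp.induction_linear with
    | zero =>
      intro c
      rw [show (MvPolynomial.monomial 0 c : MvPolynomial (Fin nv) k) =
        algebraMap k (MvPolynomial (Fin nv) k) c from rfl, AlgHom.commutes]
      have : w 0 = 0 := by simp [w]
      rw [this]
      intro i x hx
      rw [add_zero, Module.algebraMap_end_apply]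
      exact Submodule.smul_mem _ _ hx
    | add m m' hm hm' =>
      intro c
      have h1 : (MvPolynomial.monomial (m + m') c : MvPolynomial (Fin nv) k) =
          MvPolynomial.monomial m' 1 * MvPolynomial.monomial m c := by
        rw [MvPolynomial.monomial_mul, one_mul, add_comm]
      have h2 : w (m + m') = w m + w m' := by
        simp [w, add_mul, Finset.sum_add_distrib]
      rw [h1, map_mul, h2]
      exact ghom_comp (hm' 1) (hm c)
    | single i n =>
      intro c
      have hpow : ∀ n : ℕ, (e (MvPolynomial.X i ^ n) :
          (S.Δ σ).carrier →ₗ[A.carrier] (S.Δ σ).carrier) ∈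
          ghomSet (S.Δ σ) (S.Δ σ) ((n : ℤ) * dg i) := by
        intro n
        induction n with
        | zero =>
          rw [pow_zero, map_one]
          intro i x hx
          simpa using hx
        | succ n ih =>
          rw [pow_succ, map_mul]
          have := ghom_comp ih (hX i)
          have h3 : ((n + 1 : ℕ) : ℤ) * dg i = dg i + (n : ℤ) * dg i := by push_cast; ring
          rw [h3]
          exact this
      have h1 : (MvPolynomial.monomial (Finsupp.single i n) c : MvPolynomial (Fin nv) k) =
          c • MvPolynomial.X i ^ n := by
        rw [MvPolynomial.X_pow_eq_monomial, MvPolynomial.smul_monomial, smul_eq_mul, mul_one]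
      have h2 : w (Finsupp.single i n) = (n : ℤ) * dg i := by
        simp only [w]
        rw [Finset.sum_eq_single i]
        · simp
        · intro b _ hb
          simp [hb.symm]
        · simp
      rw [h1, h2, map_smul]
      exact ghom_smul c (hpow n)
  refine ⟨if j < 0 then 0 else MvPolynomial.coeff 0 p, fun h => if_pos h, fun x => ?_⟩
  induction x using hom_induction (S.Δ σ).internal with
  | h0 => simp
  | hadd x y hx hy => rw [map_add, hx, hy, smul_add]
  | hhom i x hx =>
    have h1 : φ x = ∑ m ∈ p.support, e (MvPolynomial.monomial m (MvPolynomial.coeff m p)) x := by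
      rw [← hp]
      conv_lhs => rw [MvPolynomial.as_sum p, map_sum, LinearMap.sum_apply]
    rw [← gpr_self (S.Δ σ).internal _ (hφ i x hx), h1, map_sum]
    have h2 : ∀ m ∈ p.support, m ≠ 0 ∨ j < 0 → gpr (S.Δ σ).internal (i + j)
        (e (MvPolynomial.monomial m (MvPolynomial.coeff m p)) x) = 0 := by
      intro m _ hm
      refine gpr_ne _ (fun h => ?_) (hmono m _ i x hx)
      have h3 := hw0 m
      have h4 : w m = 0 := by omega
      rcases hm with hm | hm
      · exact hm (hw1 m h4)
      · omega
    split_ifs with hj'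
    · rw [zero_smul]
      exact Finset.sum_eq_zero fun m hm => h2 m hm (Or.inr hj')
    · have hj0 : j = 0 := by omega
      subst hj0
      rw [Finset.sum_eq_single 0 (fun m hm hm0 => h2 m hm (Or.inl hm0))]
      · rw [show (MvPolynomial.monomial 0 (MvPolynomial.coeff 0 p) : MvPolynomial (Fin nv) k) =
          algebraMap k (MvPolynomial (Fin nv) k) (MvPolynomial.coeff 0 p) from rfl,
          AlgHom.commutes, Module.algebraMap_end_apply, add_zero, map_smul, gpr_self _ _ hx]
      · intro h0
        rw [MvPolynomial.notMem_support_iff.1 h0]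
        simp

/-- Homogeneous endomorphisms of `P(σ)` of nonpositive degree act on `Δ(σ)` by scalars. -/
theorem AHW.end_proj {σ : Idx} {j : ℤ} (hj : j ≤ 0)
    {e : (S.P σ).carrier →ₗ[A.carrier] (S.P σ).carrier} (he : e ∈ ghomSet (S.P σ) (S.P σ) j) :
    ∃ c : k, (j < 0 → c = 0) ∧ ∀ x, S.qm σ (e x) = c • S.qm σ x := by
  have hqe := ghom_comp (S.qm_ghom σ) he
  obtain ⟨φ, hφ, hφ'⟩ := ghom_factor (S.qm_ghom σ) (S.qm_surj σ) hqe
    (S.qm_ker_map (N := ⊥) hqe fun ρ hρ d f hf => by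
      rw [std_hom_zero S (not_le_of_gt hρ) (S.proj ρ) hf, LinearMap.range_zero])
  obtain ⟨c, hc, hc'⟩ := S.end_std (by omega) hφ
  refine ⟨c, fun h => hc (by omega), fun x => ?_⟩
  rw [← hc']
  exact (LinearMap.congr_fun hφ' x).symm

end Standard

/-! ### Maps to proper costandard modules -/

section Costandard

/-- A homogeneous map of degree `n` defined on a submodule of a graded module. -/
def PHom {M Q : GMod A} (n : ℤ) {Y : Submodule A.carrier M.carrier}
    (β : Y →ₗ[A.carrier] Q.carrier) : Prop :=
  ∀ (i : ℤ) (y : Y), (y : M.carrier) ∈ M.grading i → β y ∈ Q.grading (i + n)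

/-- Gluing of a homogeneous map on a graded submodule `Y` with a homogeneous map on `P`,
compatible along a homogeneous map `u : P → T`. -/
theorem glue {P T Q : GMod A} {n d : ℤ} {Y : Submodule A.carrier T.carrier} (hY : T.IsGSub Y)
    {β : Y →ₗ[A.carrier] Q.carrier} (hβ : PHom n β)
    {u : P.carrier →ₗ[A.carrier] T.carrier} (hu : u ∈ ghomSet P T d)
    {γ : P.carrier →ₗ[A.carrier] Q.carrier} (hγ : γ ∈ ghomSet P Q (d + n))
    (h : ∀ x (hx : u x ∈ Y), γ x = β ⟨u x, hx⟩) :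
    ∃ β' : (Y ⊔ LinearMap.range u : Submodule A.carrier T.carrier) →ₗ[A.carrier] Q.carrier,
      PHom n β' ∧ (∀ y (hy : y ∈ Y) (hy' : y ∈ Y ⊔ LinearMap.range u), β' ⟨y, hy'⟩ = β ⟨y, hy⟩) ∧
      ∀ x (hx : u x ∈ Y ⊔ LinearMap.range u), β' ⟨u x, hx⟩ = γ x := by
  have hsm : ∀ z : Y × P.carrier, (z.1 : T.carrier) + u z.2 ∈ Y ⊔ LinearMap.range u :=
    fun z => Submodule.add_mem_sup z.1.2 ⟨z.2, rfl⟩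
  let s : (Y × P.carrier) →ₗ[A.carrier] (Y ⊔ LinearMap.range u : Submodule A.carrier T.carrier) :=
    (LinearMap.coprod Y.subtype u).codRestrict _ hsm
  have hs : ∀ z, ((s z : (Y ⊔ LinearMap.range u : Submodule A.carrier T.carrier)) : T.carrier) =
    (z.1 : T.carrier) + u z.2 := fun z => rfl
  have hss : Function.Surjective s := by
    rintro ⟨z, hz⟩
    obtain ⟨y, hy, _, ⟨x, rfl⟩, rfl⟩ := Submodule.mem_sup.1 hz
    exact ⟨(⟨y, hy⟩, x), rfl⟩
  clear_value s
  have hk : LinearMap.ker s ≤ LinearMap.ker (LinearMap.coprod β γ) := by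
    rintro ⟨y, x⟩ hz
    have h1 : (y : T.carrier) + u x = 0 := by
      have h0 := hs (y, x)
      rw [LinearMap.mem_ker.1 hz] at h0
      exact h0.symm
    have h2 : u x = -(y : T.carrier) := eq_neg_of_add_eq_zero_right h1
    have h3 : u x ∈ Y := by rw [h2]; exact Y.neg_mem y.2
    have h4 : (⟨u x, h3⟩ : Y) = -y := Subtype.ext h2
    rw [LinearMap.mem_ker, LinearMap.coprod_apply]
    change β y + γ x = 0
    rw [h x h3, h4, map_neg, add_neg_cancel]
  let β' := (LinearMap.ker s).liftQ (LinearMap.coprod β γ) hk ∘ₗ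
    (s.quotKerEquivOfSurjective hss).symm.toLinearMap
  have hβ' : ∀ z, β' (s z) = β z.1 + γ z.2 := by
    intro z
    have : (s.quotKerEquivOfSurjective hss).symm (s z) = Submodule.Quotient.mk z := by
      rw [LinearEquiv.symm_apply_eq]; rfl
    simp [β', this]
  refine ⟨β', ?_, ?_, ?_⟩
  · rintro i w hw
    obtain ⟨⟨y, x⟩, rfl⟩ := hss w
    have hy' := GMod.isGSub_iff.1 hY y y.2 i
    have he : s (y, x) = s (⟨T.pr i y, hy'⟩, P.pr (i - d) x) := by
      apply Subtype.ext
      rw [hs, hs]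
      change (y : T.carrier) + u x = T.pr i y + u (P.pr (i - d) x)
      rw [ghom_pr hu, sub_add_cancel, ← map_add]
      rw [hs] at hw
      exact (gpr_self T.internal i hw).symm
    rw [he, hβ']
    refine Submodule.add_mem _ (hβ i _ (gpr_mem T.internal i _)) ?_
    have := hγ _ _ (gpr_mem P.internal (i - d) x)
    rwa [show i - d + (d + n) = i + n by ring] at this
  · intro y hy hy'
    have : (⟨y, hy'⟩ : (Y ⊔ LinearMap.range u : Submodule A.carrier T.carrier)) =
        s (⟨y, hy⟩, 0) := Subtype.ext (by rw [hs]; simp)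
    rw [this, hβ']
    simp
  · intro x hx
    have : (⟨u x, hx⟩ : (Y ⊔ LinearMap.range u : Submodule A.carrier T.carrier)) =
        s (0, x) := Subtype.ext (by rw [hs]; simp)
    rw [this, hβ']
    simp

variable [IsNoetherianRing A.carrier] (S : AHW A Idx)

theorem AHW.sm_qm_ne (σ : Idx) : S.sm σ ∘ₗ S.qm σ ≠ 0 := by
  intro h
  apply S.sm_ne σ
  ext y
  obtain ⟨x, rfl⟩ := S.qm_surj σ y
  exact LinearMap.congr_fun h x

theorem AHW.sm_qm_ghom (σ : Idx) : S.sm σ ∘ₗ S.qm σ ∈ ghomSet (S.P σ) (S.pco σ) 0 := by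
  simpa using ghom_comp (S.sm_ghom σ) (S.qm_ghom σ)

/-- The composite `P(σ) → Δ(σ) → ∇̄(σ)` kills every proper graded submodule `Z`: otherwise
the image of `Z` contains the image of `P(σ)`, so that `P(σ)` is the sum of `Z` and the kernel,
which are both contained in its largest proper graded submodule. -/
theorem AHW.sm_qm_proper {σ : Idx} {Z : Submodule A.carrier (S.P σ).carrier}
    (hZ : (S.P σ).IsGSub Z) (hne : Z ≠ ⊤) : Z ≤ LinearMap.ker (S.sm σ ∘ₗ S.qm σ) := by
  obtain ⟨p, hps, hpc⟩ := S.cover σ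
  have hp : p.1 ∈ ghomSet (S.P σ) (S.L σ) 0 := fun i x hx => by
    rw [add_zero]; exact p.2 i x hx
  have hmax : ∀ Z : Submodule A.carrier (S.P σ).carrier, (S.P σ).IsGSub Z → Z ≠ ⊤ →
      Z ≤ LinearMap.ker p.1 := by
    intro Z hZ hne
    rcases (S.simple σ).2 _ (ghom_map hp hZ) with h | h
    · exact LinearMap.le_ker_iff_map.2 h
    · refine absurd (hpc Z hZ ?_) hne
      rw [← Submodule.comap_map_eq, h, Submodule.comap_top]
  have hK : LinearMap.ker (S.sm σ ∘ₗ S.qm σ) ≠ ⊤ := fun h =>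
    S.sm_qm_ne σ (LinearMap.ker_eq_top.1 h)
  by_contra hle
  have hQ : Z.map (S.sm σ ∘ₗ S.qm σ) ≠ ⊥ := fun h =>
    hle (LinearMap.le_ker_iff_map.2 h)
  have hs := S.socle (ghom_map (S.sm_qm_ghom σ) hZ) hQ
  have htop : Z ⊔ LinearMap.ker (S.sm σ ∘ₗ S.qm σ) = ⊤ := by
    rw [← Submodule.comap_map_eq, eq_top_iff]
    intro x _
    exact hs ⟨S.qm σ x, rfl⟩
  have h3 := sup_le (hmax Z hZ hne) (hmax _ (ghom_ker (S.sm_qm_ghom σ)) hK)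
  rw [htop] at h3
  have := (S.simple σ).1
  obtain ⟨y, hy⟩ := exists_ne (0 : (S.L σ).carrier)
  obtain ⟨x, rfl⟩ := hps y
  exact hy (h3 trivial)

theorem AHW.pco_extProp (σ τ : Idx) : ExtProp (S.Δ τ) (S.pco σ) :=
  extProp_of_ext1 (S.pco_ext σ τ)

/-- A homogeneous map to `∇̄(σ)` extends to `T` from a graded submodule containing the images
of all homogeneous maps from `P(τ)`, `τ ≥ σ`. On a maximal domain `Y'` of extension that is not
all of `T` there is a map `u : P(τ) → T`, `τ ≱ σ`, not landing in `Y'` but sending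
`ker (P(τ) → Δ(τ))` to `Y'`; then `ext¹(Δ(τ), ∇̄(σ)) = 0` allows an extension to `Y' + im u`. -/
theorem AHW.extend_partial {σ : Idx} {T : GMod A} {n : ℤ} {Y : Submodule A.carrier T.carrier}
    (hY : T.IsGSub Y) {β : Y →ₗ[A.carrier] (S.pco σ).carrier} (hβ : PHom n β)
    (hσ : ∀ τ, σ ≤ τ → ∀ (d : ℤ), ∀ u ∈ ghomSet (S.P τ) T d, LinearMap.range u ≤ Y) :
    ∃ g ∈ ghomSet T (S.pco σ) n, ∀ y : Y, g y = β y := by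
  have := T.fg
  obtain ⟨Y', ⟨hY', hYY', β', hβ', hext⟩, hmax⟩ := WellFounded.has_min
    (wellFounded_gt (α := Submodule A.carrier T.carrier))
    {Y' | T.IsGSub Y' ∧ Y ≤ Y' ∧ ∃ β' : Y' →ₗ[A.carrier] (S.pco σ).carrier, PHom n β' ∧
      ∀ y (hy : y ∈ Y) (hy' : y ∈ Y'), β' ⟨y, hy'⟩ = β ⟨y, hy⟩}
    ⟨Y, hY, le_rfl, β, hβ, fun _ _ _ => rfl⟩
  by_cases htop : Y' = ⊤
  · subst htop
    exact ⟨β' ∘ₗ LinearMap.id.codRestrict ⊤ (fun _ => trivial), fun i x hx => hβ' i ⟨x, trivial⟩ hx,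
      fun y => hext y y.2 trivial⟩
  exfalso
  obtain ⟨τ, d, u, hu, hur, huk⟩ := S.exists_maxSupp hY' htop
  have hστ : ¬ σ ≤ τ := fun h => hur ((hσ τ h d u hu).trans hYY')
  obtain ⟨γ, hγ, hγe⟩ := S.pco_extProp σ τ 0 (S.P τ) (S.qm τ) (S.qm_ghom τ) (S.qm_surj τ) (d + n)
    (β' ∘ₗ (u ∘ₗ (LinearMap.ker (S.qm τ)).subtype).codRestrict Y' (fun x => huk x.2))
    (fun i x hx => by
      rw [← add_assoc]
      exact hβ' _ _ (hu i _ hx))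
  -- `β' ∘ u` and `γ` agree on `u⁻¹(Y')`: their difference factors through a submodule of `Δ(τ)`,
  -- and it would hit the image of `Δ(σ)` in `∇̄(σ)`, whereas `P(σ)` has no map to `Δ(τ)`.
  have compat : ∀ x (hx : u x ∈ Y'), γ x = β' ⟨u x, hx⟩ := by
    obtain ⟨X, inc, hi, hii, hir⟩ := exists_sub (S.P τ) (ghom_comap hu hY')
    have hmem : ∀ z, u (inc z) ∈ Y' := fun z => by
      have : inc z ∈ Y'.comap u := hir ▸ ⟨z, rfl⟩
      exact this
    let δ : X.carrier →ₗ[A.carrier] (S.pco σ).carrier :=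
      β' ∘ₗ (u ∘ₗ inc).codRestrict Y' hmem - γ ∘ₗ inc
    have hδv : ∀ z, δ z = β' ⟨u (inc z), hmem z⟩ - γ (inc z) := fun z => rfl
    have hδ : δ ∈ ghomSet X (S.pco σ) (d + n) := fun i z hz => by
      have h1 := hi i z hz
      rw [add_zero] at h1
      refine Submodule.sub_mem _ ?_ (hγ i _ h1)
      rw [← add_assoc]
      exact hβ' _ _ (hu i _ h1)
    have hδ0 : LinearMap.range δ = ⊥ := by
      by_contra hne
      have hs := S.socle (ghom_range hδ) hne
      obtain ⟨l, hl, hl'⟩ := proj_lift (S.proj σ) (S.sm_qm_ghom σ) hδ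
        ((LinearMap.range_comp_le_range _ _).trans hs)
      have hz := std_hom_zero S hστ (S.proj σ) (ghom_comp (S.qm_ghom τ) (ghom_comp hi hl))
      apply S.sm_qm_ne σ
      rw [← hl']
      ext y
      have hy : inc (l y) ∈ LinearMap.ker (S.qm τ) := LinearMap.congr_fun hz y
      have := hγe ⟨_, hy⟩
      change δ (l y) = 0
      rw [hδv, sub_eq_zero]
      exact this.symm
    intro x hx
    have hx' : x ∈ LinearMap.range inc := by rw [hir]; exact hx
    obtain ⟨z, rfl⟩ := hx'
    have : δ z ∈ LinearMap.range δ := ⟨z, rfl⟩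
    rw [hδ0, Submodule.mem_bot, hδv, sub_eq_zero] at this
    exact this.symm
  obtain ⟨β'', hβ'', h1, -⟩ := glue hY' hβ' hu hγ compat
  exact hmax (Y' ⊔ LinearMap.range u) ⟨hY'.sup (ghom_range hu), hYY'.trans le_sup_left, β'', hβ'',
    fun y hy hy' => (h1 y (hYY' hy) hy').trans (hext y hy _)⟩ (left_lt_sup.2 hur)

/-- Existence of a homogeneous map `T → ∇̄(σ)` which is nonzero on the image of a map
`f₁ : P(σ) → T` of minimal degree `d₀`. The bound `hi` on the degrees of generators of `P(σ)`
and of the kernel of `P(σ) → Δ(σ)` enters through `hgP` and `hgK`; `hU` says that the images of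
the homogeneous maps from `P(τ)`, `τ > σ`, live in degrees above `d₀ + hi`. -/
theorem AHW.exists_to_pco {T : GMod A} {σ : Idx} {d₀ hi : ℤ}
    {f₁ : (S.P σ).carrier →ₗ[A.carrier] T.carrier} (hf₁ : f₁ ∈ ghomSet (S.P σ) T d₀)
    (hne : f₁ ≠ 0)
    (hlow : ∀ d < d₀, ∀ h ∈ ghomSet (S.P σ) T d, h = 0)
    (hgP : ∀ f : (S.P σ).carrier →ₗ[A.carrier] T.carrier,
      (∀ i ≤ hi, ∀ x ∈ (S.P σ).grading i, f x = 0) → f = 0)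
    (hgK : ∀ f : (S.P σ).carrier →ₗ[A.carrier] T.carrier,
      (∀ i ≤ hi, ∀ x ∈ (S.P σ).grading i, S.qm σ x = 0 → f x = 0) →
        LinearMap.ker (S.qm σ) ≤ LinearMap.ker f)
    (hU : ∀ i ≤ hi, ∀ x ∈ T.grading (i + d₀), x ∈ sSup {R | ∃ ρ, σ < ρ ∧ ∃ d,
      ∃ h ∈ ghomSet (S.P ρ) T d, R = LinearMap.range h} → x = 0) :
    ∃ g ∈ ghomSet T (S.pco σ) (-d₀), ∃ f' ∈ ghomSet (S.Δ σ) T d₀,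
      ∀ x, g (f' x) = S.sm σ x := by
  have := T.fg
  set U := sSup {R | ∃ ρ, σ < ρ ∧ ∃ d, ∃ h ∈ ghomSet (S.P ρ) T d, R = LinearMap.range h} with hUdef
  have hUle : ∀ ρ, σ < ρ → ∀ (d : ℤ), ∀ h ∈ ghomSet (S.P ρ) T d, LinearMap.range h ≤ U :=
    fun ρ hρ d h hh => le_sSup ⟨ρ, hρ, d, h, hh, rfl⟩
  have hkill : LinearMap.ker (S.qm σ) ≤ LinearMap.ker f₁ := hgK f₁ fun i hi' x hx hqx =>
    hU i hi' _ (hf₁ i x hx) (S.qm_ker_map hf₁ hUle hqx)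
  have hfU : ¬ LinearMap.range f₁ ≤ U := fun h =>
    hne (hgP f₁ fun i hi' x hx => hU i hi' _ (hf₁ i x hx) (h ⟨x, rfl⟩))
  -- `f₁` is not in the span of the images of maps from `P(ρ)`, `ρ > σ`, and of maps from `P(σ)` of
  -- degree larger than `d₀`; `N` is maximal among the graded submodules containing this span and
  -- not containing the image of `f₁`.
  let 𝒮 : Set (Submodule A.carrier T.carrier) :=
    {R | (∃ ρ, σ < ρ ∧ ∃ d, ∃ h ∈ ghomSet (S.P ρ) T d, R = LinearMap.range h) ∨
      ∃ d, d₀ < d ∧ ∃ h ∈ ghomSet (S.P σ) T d, R = LinearMap.range h}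
  have h𝒮 : ∀ R ∈ 𝒮, T.IsGSub R := by
    rintro _ (⟨ρ, -, d, h, hh, rfl⟩ | ⟨d, -, h, hh, rfl⟩) <;> exact ghom_range hh
  have hN0 : ¬ LinearMap.range f₁ ≤ sSup 𝒮 := by
    intro hle
    refine hfU (proj_sSup (S.proj σ) h𝒮 ?_ hf₁ hle)
    rintro _ (⟨ρ, hρ, d, h, hh, rfl⟩ | ⟨d, hd, h, hh, rfl⟩) f hf hfr
    · exact hfr.trans (hUle ρ hρ d h hh)
    · obtain ⟨e, he, rfl⟩ := proj_lift (S.proj σ) hf hh hfr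
      obtain ⟨c, hc, hce⟩ := S.end_proj (by omega) he
      rintro _ ⟨x, rfl⟩
      refine S.qm_ker_map hh hUle (?_ : S.qm σ (e x) = 0)
      rw [hce, hc (by omega), zero_smul]
  obtain ⟨N, ⟨hN, hNN, hfN⟩, hmax⟩ := WellFounded.has_min
    (wellFounded_gt (α := Submodule A.carrier T.carrier))
    {R | T.IsGSub R ∧ sSup 𝒮 ≤ R ∧ ¬ LinearMap.range f₁ ≤ R}
    ⟨sSup 𝒮, GMod.isGSub_sSup h𝒮, le_rfl, hN0⟩
  have hgtN : ∀ ρ, σ < ρ → ∀ (d : ℤ), ∀ h ∈ ghomSet (S.P ρ) T d, LinearMap.range h ≤ N :=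
    fun ρ hρ d h hh => le_trans (le_sSup (Or.inl ⟨ρ, hρ, d, h, hh, rfl⟩)) hNN
  -- By the maximality of `N`, and since degree `0` endomorphisms of `P(σ)` act on `Δ(σ)` by
  -- scalars, all maps from `P(τ)`, `τ ≥ σ`, land in `N + im f₁`.
  have hY0 : ∀ τ, σ ≤ τ → ∀ (d : ℤ), ∀ u ∈ ghomSet (S.P τ) T d,
      LinearMap.range u ≤ N ⊔ LinearMap.range f₁ := by
    intro τ hτ d u hu
    rcases hτ.lt_or_eq with hlt | rfl
    · exact (hgtN τ hlt d u hu).trans le_sup_left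
    rcases lt_trichotomy d d₀ with hd | rfl | hd
    · rw [hlow d hd u hu, LinearMap.range_zero]; exact bot_le
    · by_cases huN : LinearMap.range u ≤ N
      · exact huN.trans le_sup_left
      have hf : LinearMap.range f₁ ≤ N ⊔ LinearMap.range u := by
        by_contra hf
        exact hmax _ ⟨hN.sup (ghom_range hu), hNN.trans le_sup_left, hf⟩ (left_lt_sup.2 huN)
      obtain ⟨f₂, hf₂, h2, h1⟩ := proj_split (S.proj σ) hf₁ hN (ghom_range hu) hf
      obtain ⟨e, he, rfl⟩ := proj_lift (S.proj σ) hf₂ hu h2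
      obtain ⟨c, -, hce⟩ := S.end_proj (by omega) he
      have hkN := S.qm_ker_map hu hgtN
      have hmem : ∀ x, f₁ x - c • u x ∈ N := by
        intro x
        have h3 : u (e x - c • x) ∈ N := hkN (by
          rw [LinearMap.mem_ker, map_sub, hce, LinearMap.map_smul_of_tower, sub_self])
        have h4 := N.add_mem (h1 ⟨x, rfl⟩) h3
        simpa [LinearMap.map_smul_of_tower] using h4
      have hc : c ≠ 0 := by
        rintro rfl
        refine hfN ?_
        rintro _ ⟨x, rfl⟩
        simpa using hmem x
      rintro _ ⟨x, rfl⟩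
      have h5 : u x = -(c⁻¹ • (f₁ x - c • u x)) + c⁻¹ • f₁ x := by
        rw [smul_sub, smul_smul, inv_mul_cancel₀ hc, one_smul]; abel
      rw [h5]
      refine Submodule.add_mem_sup (N.neg_mem (Submodule.smul_of_tower_mem N _ (hmem x))) ?_
      exact ⟨c⁻¹ • x, LinearMap.map_smul_of_tower f₁ _ _⟩
    · exact le_trans (le_trans (le_sSup (Or.inr ⟨d, hd, u, hu, rfl⟩)) hNN) le_sup_left
  -- The map `N + im f₁ → ∇̄(σ)` that is zero on `N` and `P(σ) → ∇̄(σ)` on `im f₁`.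
  obtain ⟨β, hβ, -, hβf⟩ := glue (Q := S.pco σ) (n := -d₀) (β := 0) hN
    (fun i y _ => Submodule.zero_mem _) hf₁ (γ := S.sm σ ∘ₗ S.qm σ)
    (by rw [add_neg_cancel]; exact S.sm_qm_ghom σ) (by
      intro x hx
      refine S.sm_qm_proper (ghom_comap hf₁ hN) (fun h => hfN ?_) hx
      rintro _ ⟨y, rfl⟩
      have : y ∈ N.comap f₁ := by rw [h]; trivial
      exact this)
  obtain ⟨g, hg, hge⟩ := S.extend_partial (hN.sup (ghom_range hf₁)) hβ hY0
  obtain ⟨f', hf', hf'e⟩ := ghom_factor (S.qm_ghom σ) (S.qm_surj σ) hf₁ hkill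
  refine ⟨g, hg, f', by simpa using hf', fun y => ?_⟩
  obtain ⟨x, rfl⟩ := S.qm_surj σ y
  have h1 : f' (S.qm σ x) = f₁ x := LinearMap.congr_fun hf'e x
  have hx : f₁ x ∈ N ⊔ LinearMap.range f₁ := le_sup_right (a := N) ⟨x, rfl⟩
  rw [h1, hge ⟨_, hx⟩, hβf]
  rfl

end Costandard

/-! ### Splitting off a proper costandard module -/

section Step

variable [IsNoetherianRing A.carrier]

omit [IsNoetherianRing A.carrier] in
theorem ghom_deg_unique {M N : GMod A} {d d' : ℤ} {f : M.carrier →ₗ[A.carrier] N.carrier}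
    (h : f ∈ ghomSet M N d) (h' : f ∈ ghomSet M N d') (hne : f ≠ 0) : d = d' := by
  by_contra hdd
  apply hne
  ext x
  induction x using hom_induction M.internal with
  | h0 => simp
  | hadd x y hx hy => rw [map_add, hx, hy, LinearMap.zero_apply, LinearMap.zero_apply,
      LinearMap.zero_apply, add_zero]
  | hhom i x hx =>
    rw [← gpr_self N.internal _ (h i x hx)]
    exact gpr_ne N.internal (by omega) (h' i x hx)

/-- `ExtProp` for the kernel presented as an injective homogeneous map. -/
theorem ExtProp.extend {U T : GMod A} (h : ExtProp U T) {d n : ℤ} {X K : GMod A}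
    {q : X.carrier →ₗ[A.carrier] U.carrier} (hq : q ∈ ghomSet X U d)
    (hs : Function.Surjective q) {ι : K.carrier →ₗ[A.carrier] X.carrier} (hι : ι ∈ ghomSet K X 0)
    (hinj : Function.Injective ι) (hr : LinearMap.range ι = LinearMap.ker q)
    {w : K.carrier →ₗ[A.carrier] T.carrier} (hw : w ∈ ghomSet K T n) :
    ∃ v' ∈ ghomSet X T n, ∀ x, v' (ι x) = w x := by
  obtain ⟨j, hj, hj'⟩ := ghom_factor_inj hι hinj (sub_incl_ghom X (ghom_ker hq)) (by
    rw [hr]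
    exact (Submodule.range_subtype _).le)
  obtain ⟨v', hv', he⟩ := h d X q hq hs n (w ∘ₗ j) (fun i x hx => by
    have := hw _ _ (hj i x hx)
    rwa [sub_self, add_zero] at this)
  refine ⟨v', hv', fun x => ?_⟩
  have hx : ι x ∈ LinearMap.ker q := hr ▸ ⟨x, rfl⟩
  have h1 : ι (j ⟨ι x, hx⟩) = ι x := LinearMap.congr_fun hj' ⟨ι x, hx⟩
  rw [← hinj h1]
  conv_lhs => rw [h1]
  exact he ⟨ι x, hx⟩

variable (S : AHW A Idx) {σ : Idx} {T : GMod A} {d₀ : ℤ}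
  {g : T.carrier →ₗ[A.carrier] (S.pco σ).carrier}
  {f' : (S.Δ σ).carrier →ₗ[A.carrier] T.carrier}

omit [IsNoetherianRing A.carrier] in
/-- Every homogeneous map `Δ(ρ) → ∇̄(σ)` lifts along a map `g : T → ∇̄(σ)` along which the
spanning map `Δ(σ) → ∇̄(σ)` lifts. -/
theorem AHW.lift_std (hf' : f' ∈ ghomSet (S.Δ σ) T d₀)
    (hgf : ∀ x, g (f' x) = S.sm σ x) {ρ : Idx} {d : ℤ}
    {φ : (S.Δ ρ).carrier →ₗ[A.carrier] (S.pco σ).carrier} (hφ : φ ∈ ghomSet (S.Δ ρ) (S.pco σ) d) :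
    ∃ φ' ∈ ghomSet (S.Δ ρ) T (d + d₀), ∀ x, g (φ' x) = φ x := by
  by_cases h0 : φ = 0
  · exact ⟨0, ghom_zero _ _ _, fun x => by rw [h0, LinearMap.zero_apply, map_zero]; rfl⟩
  · obtain ⟨rfl, c, -, hc⟩ := S.sm_smul hφ h0
    have hφc : φ = c • S.sm σ := LinearMap.ext hc
    have hd : d = 0 := ghom_deg_unique hφ (hφc ▸ ghom_smul c (S.sm_ghom σ)) h0
    refine ⟨c • f', by rw [hd, zero_add]; exact ghom_smul c hf', fun x => ?_⟩
    rw [LinearMap.smul_apply, LinearMap.map_smul_of_tower, hgf, hc]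

omit [IsNoetherianRing A.carrier] in
/-- A map `u` on `X` whose restriction to the kernel of a map onto `Δ(ρ)` lifts along `g`,
up to extending the lift to `X`, lifts along `g` itself. -/
theorem AHW.lift_correct (hg : g ∈ ghomSet T (S.pco σ) (-d₀)) (hf' : f' ∈ ghomSet (S.Δ σ) T d₀)
    (hgf : ∀ x, g (f' x) = S.sm σ x) {ρ : Idx} {X : GMod A} {dq n : ℤ}
    {q : X.carrier →ₗ[A.carrier] (S.Δ ρ).carrier} (hq : q ∈ ghomSet X (S.Δ ρ) dq)
    (hs : Function.Surjective q) {u : X.carrier →ₗ[A.carrier] (S.pco σ).carrier}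
    (hu : u ∈ ghomSet X (S.pco σ) n) {v' : X.carrier →ₗ[A.carrier] T.carrier}
    (hv' : v' ∈ ghomSet X T (n + d₀)) (h : ∀ x, q x = 0 → g (v' x) = u x) :
    ∃ u' ∈ ghomSet X T (n + d₀), (∀ x, g (u' x) = u x) ∧ ∀ x, q x = 0 → u' x = v' x := by
  have hgv : g ∘ₗ v' ∈ ghomSet X (S.pco σ) n := by simpa using ghom_comp hg hv'
  obtain ⟨φ, hφ, hφq⟩ := ghom_factor hq hs (ghom_sub hu hgv) (fun x hx => by
    rw [LinearMap.mem_ker, LinearMap.sub_apply, LinearMap.comp_apply, h x hx, sub_self])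
  obtain ⟨φ', hφ', hφg⟩ := S.lift_std hf' hgf hφ
  refine ⟨v' + φ' ∘ₗ q, ghom_add hv' (by
    have := ghom_comp hφ' hq
    rwa [show dq + (n - dq + d₀) = n + d₀ by ring] at this), fun x => ?_, fun x hx => ?_⟩
  · have h1 : φ (q x) = u x - g (v' x) := LinearMap.congr_fun hφq x
    rw [LinearMap.add_apply, map_add, LinearMap.comp_apply, hφg, h1]
    abel
  · rw [LinearMap.add_apply, LinearMap.comp_apply, hx, map_zero, add_zero]

/-- Every homogeneous map `P(τ) → ∇̄(σ)` lifts along `g`, by induction along the filtration of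
`P(τ)` by standard modules. -/
theorem AHW.lift_proj (hT : ∀ ρ, ExtProp (S.Δ ρ) T)
    (hg : g ∈ ghomSet T (S.pco σ) (-d₀)) (hf' : f' ∈ ghomSet (S.Δ σ) T d₀)
    (hgf : ∀ x, g (f' x) = S.sm σ x) {τ : Idx} {n : ℤ}
    {u : (S.P τ).carrier →ₗ[A.carrier] (S.pco σ).carrier} (hu : u ∈ ghomSet (S.P τ) (S.pco σ) n) :
    ∃ u' ∈ ghomSet (S.P τ) T (n + d₀), ∀ x, g (u' x) = u x := by
  obtain ⟨F, h0, ⟨N, hN⟩, hgr, hanti, hstep⟩ := std_filt S τ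
  have key : ∀ m n', n' + m = N → ∀ (X : GMod A) (inc : X.carrier →ₗ[A.carrier] (S.P τ).carrier),
      inc ∈ ghomSet X (S.P τ) 0 → LinearMap.range inc ≤ F n' →
      ∃ v ∈ ghomSet X T (n + d₀), ∀ x, g (v x) = u (inc x) := by
    intro m
    induction m with
    | zero =>
      intro n' hn X inc hinc hr
      obtain rfl : n' = N := by omega
      rw [hN] at hr
      refine ⟨0, ghom_zero _ _ _, fun x => ?_⟩
      have : inc x = 0 := (Submodule.mem_bot _).1 (hr ⟨x, rfl⟩)
      rw [this, map_zero, LinearMap.zero_apply, map_zero]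
    | succ m ih =>
      intro n' hn X inc hinc hr
      rcases hstep n' with h | ⟨ρ, -, -, X₀, inc₀, d, q, hi, hii, hir, hq, hqs, hqk⟩
      · exact ih (n' + 1) (by omega) X inc hinc (hr.trans h)
      obtain ⟨K, ι, hι, hιi, hιr⟩ := exists_sub X₀ (ghom_ker hq)
      obtain ⟨w, hw, hwg⟩ := ih (n' + 1) (by omega) K (inc₀ ∘ₗ ι)
        (by simpa using ghom_comp hi hι) (by
          rintro _ ⟨x, rfl⟩
          refine (hqk (ι x)).1 ?_
          have : ι x ∈ LinearMap.ker q := hιr ▸ ⟨x, rfl⟩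
          exact this)
      obtain ⟨v', hv', hve⟩ := (hT ρ).extend hq hqs hι hιi hιr hw
      obtain ⟨u', hu', hug, -⟩ := S.lift_correct hg hf' hgf hq hqs (u := u ∘ₗ inc₀) (n := n)
        (by simpa using ghom_comp hu hi) hv' (fun x hx => by
          have hx' : x ∈ LinearMap.range ι := by rw [hιr]; exact hx
          obtain ⟨y, rfl⟩ := hx'
          rw [hve, hwg]; rfl)
      obtain ⟨j, hj, hji⟩ := ghom_factor_inj hi hii hinc (hr.trans hir.ge)
      refine ⟨u' ∘ₗ j, by simpa using ghom_comp hu' hj, fun x => ?_⟩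
      rw [LinearMap.comp_apply, hug, ← hji]
      rfl
  obtain ⟨v, hv, hvg⟩ := key N 0 (by omega) (S.P τ) LinearMap.id
    (fun i x hx => by rw [add_zero]; exact hx) (by rw [h0]; exact le_top)
  exact ⟨v, hv, hvg⟩

/-- `g` is surjective, as all maps from projective covers lift along it. -/
theorem AHW.surj_of_lift (hT : ∀ ρ, ExtProp (S.Δ ρ) T)
    (hg : g ∈ ghomSet T (S.pco σ) (-d₀)) (hf' : f' ∈ ghomSet (S.Δ σ) T d₀)
    (hgf : ∀ x, g (f' x) = S.sm σ x) : Function.Surjective g := by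
  rw [← LinearMap.range_eq_top]
  by_contra hne
  obtain ⟨τ, n, u, hu, hr⟩ := S.exists_supp (ghom_range hg) hne
  obtain ⟨u', -, he⟩ := S.lift_proj hT hg hf' hgf hu
  refine hr ?_
  rintro _ ⟨x, rfl⟩
  exact ⟨u' x, he x⟩

omit [IsNoetherianRing A.carrier] in
/-- The kernel `T'` of `g` inherits the vanishing of `ext¹(Δ(ρ), T)`, because
`hom(Δ(ρ), T) → hom(Δ(ρ), ∇̄(σ))` is surjective. -/
theorem AHW.ker_extProp (hT : ∀ ρ, ExtProp (S.Δ ρ) T)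
    (hg : g ∈ ghomSet T (S.pco σ) (-d₀)) (hf' : f' ∈ ghomSet (S.Δ σ) T d₀)
    (hgf : ∀ x, g (f' x) = S.sm σ x) {T' : GMod A} {j : T'.carrier →ₗ[A.carrier] T.carrier}
    (hj : j ∈ ghomSet T' T 0) (hji : Function.Injective j)
    (hjr : LinearMap.range j = LinearMap.ker g) (ρ : Idx) : ExtProp (S.Δ ρ) T' := by
  intro d X q hq hs n v hv
  obtain ⟨v', hv', hve⟩ := hT ρ d X q hq hs n (j ∘ₗ v) (fun i x hx => by
    have := hj _ _ (hv i x hx)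
    rwa [add_zero] at this)
  obtain ⟨u, hu, hgu, hue⟩ := S.lift_correct hg hf' hgf hq hs (u := 0) (n := n - d₀)
    (ghom_zero _ _ _) (v' := v') (by rwa [sub_add_cancel]) (fun x hx => by
      have h1 := hve ⟨x, hx⟩
      have h2 : j (v ⟨x, hx⟩) ∈ LinearMap.ker g := hjr ▸ ⟨_, rfl⟩
      rw [LinearMap.zero_apply]
      exact (congrArg g h1).trans h2)
  obtain ⟨u', hu', hju⟩ := ghom_factor_inj hj hji hu (by
    rw [hjr]
    rintro _ ⟨x, rfl⟩
    exact hgu x)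
  refine ⟨u', by simpa using hu', fun x => hji ?_⟩
  rw [← LinearMap.comp_apply, hju, hue x x.2, hve]
  rfl

/-- Uniform bounds: `lo` for the degrees in which the projective covers live, `hi` for the
degrees of generators of the projective covers and of the kernels of `P(τ) → Δ(τ)`. -/
theorem AHW.exists_bounds : ∃ lo hi : ℤ, ∀ τ,
    (∀ i < lo, (S.P τ).grading i = ⊥) ∧
    (∀ (N : GMod A) (f : (S.P τ).carrier →ₗ[A.carrier] N.carrier),
      (∀ i ≤ hi, ∀ x ∈ (S.P τ).grading i, f x = 0) → f = 0) ∧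
    ∀ (N : GMod A) (f : (S.P τ).carrier →ₗ[A.carrier] N.carrier),
      (∀ i ≤ hi, ∀ x ∈ (S.P τ).grading i, S.qm τ x = 0 → f x = 0) →
        LinearMap.ker (S.qm τ) ≤ LinearMap.ker f := by
  choose lo hlo using fun τ => exists_bdd_below S.laur (S.P τ)
  choose h1 hh1 using fun τ => exists_gen_bound (S.P τ)
  choose K ι hι hιi hιr using fun τ => exists_sub (S.P τ) (ghom_ker (S.qm_ghom τ))
  choose h2 hh2 using fun τ => exists_gen_bound (K τ)
  obtain ⟨a, ha⟩ := (Set.finite_range lo).bddBelow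
  obtain ⟨b, hb⟩ := (Set.finite_range h1).bddAbove
  obtain ⟨c, hc⟩ := (Set.finite_range h2).bddAbove
  refine ⟨a, max b c, fun τ => ⟨fun i hi => hlo τ i (hi.trans_le (ha ⟨τ, rfl⟩)), ?_, ?_⟩⟩
  · intro N f hf
    have := hh1 τ N f ⊥ fun i hi x hx =>
      (Submodule.mem_bot _).2 (hf i ((hi.trans (hb ⟨τ, rfl⟩)).trans (le_max_left _ _)) x hx)
    exact LinearMap.range_eq_bot.1 (le_bot_iff.1 this)
  · intro N f hf
    have := hh2 τ N (f ∘ₗ ι τ) ⊥ fun i hi x hx => (Submodule.mem_bot _).2 (hf i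
      ((hi.trans (hc ⟨τ, rfl⟩)).trans (le_max_right _ _)) _ (by
        have := hι τ i x hx
        rwa [add_zero] at this) (by
        have : ι τ x ∈ LinearMap.ker (S.qm τ) := hιr τ ▸ ⟨x, rfl⟩
        exact this))
    rw [← hιr τ]
    rintro _ ⟨x, rfl⟩
    exact (Submodule.mem_bot _).1 (this ⟨x, rfl⟩)

/-- Splitting off one shift of `∇̄(σ)`, `σ ∉ B`: if some `P(π)` with `π ∉ B` maps nontrivially
to `T`, then `T` has a quotient `∇̄(σ)` up to shift, whose kernel again satisfies the vanishing
condition, and the quotient map is nonzero in a degree at most `D + E` as soon as some such map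
has degree at most `D`, with `E` independent of `T`. The index `σ` and the map `P(σ) → T` to work
with are those minimising the degree `d` corrected by a weight of `σ`. -/
theorem AHW.exists_step (B : Set Idx) (hB : ∀ π σ : Idx, π ≤ σ → σ ∈ B → π ∈ B) :
    ∃ E : ℤ, ∀ T : GMod A, (∀ ρ, ExtProp (S.Δ ρ) T) →
      (∃ π, π ∉ B ∧ ∃ d, ∃ h ∈ ghomSet (S.P π) T d, h ≠ 0) →
      ∃ σ, σ ∉ B ∧ ∃ d, ∃ g ∈ ghomSet T (S.pco σ) d, Function.Surjective g ∧
        (∀ (T' : GMod A) (j : T'.carrier →ₗ[A.carrier] T.carrier), j ∈ ghomSet T' T 0 →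
          Function.Injective j → LinearMap.range j = LinearMap.ker g →
          ∀ ρ, ExtProp (S.Δ ρ) T') ∧
        ∀ D, (∃ π, π ∉ B ∧ ∃ d ≤ D, ∃ h ∈ ghomSet (S.P π) T d, h ≠ 0) →
          ∃ i ≤ D + E, ∃ x ∈ T.grading i, g x ≠ 0 := by
  obtain ⟨lo, hi, hbd⟩ := S.exists_bounds
  let C : ℤ := max (hi - lo + 1) 0
  -- The weight makes indices above `σ` start at least `C` degrees later than `σ` itself.
  let w : Idx → ℤ := fun σ => C * ({τ | τ < σ} : Set Idx).ncard
  have hC : 0 ≤ C := le_max_right _ _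
  have hC' : hi - lo + 1 ≤ C := le_max_left _ _
  have hw0 : ∀ σ, 0 ≤ w σ := fun σ => mul_nonneg hC (Int.natCast_nonneg _)
  have hw1 : ∀ σ, w σ ≤ C * (Set.univ : Set Idx).ncard := fun σ =>
    mul_le_mul_of_nonneg_left (by exact_mod_cast Set.ncard_le_ncard (Set.subset_univ _)) hC
  have hw2 : ∀ σ τ, σ < τ → w σ + C ≤ w τ := by
    intro σ τ h
    have hlt : ({τ' | τ' < σ} : Set Idx).ncard < ({τ' | τ' < τ} : Set Idx).ncard :=
      Set.ncard_lt_ncard ⟨fun x hx => lt_trans hx h, fun hsub => lt_irrefl σ (hsub h)⟩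
    have : C * (({τ' | τ' < σ} : Set Idx).ncard + 1 : ℤ) ≤ C * ({τ' | τ' < τ} : Set Idx).ncard :=
      mul_le_mul_of_nonneg_left (by exact_mod_cast hlt) hC
    simp only [w]
    linarith
  refine ⟨hi + C * (Set.univ : Set Idx).ncard, fun T hT hnz => ?_⟩
  obtain ⟨loT, hloT⟩ := exists_bdd_below S.laur T
  have hdeg : ∀ π d, ∀ h ∈ ghomSet (S.P π) T d, h ≠ 0 → loT - hi ≤ d := by
    intro π d h hh hne
    by_contra hlt
    refine hne ((hbd π).2.1 T h fun i hi' x hx => ?_)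
    have := hh i x hx
    rwa [hloT _ (by omega), Submodule.mem_bot] at this
  obtain ⟨z, ⟨σ, hσ, d₀, f₁, hf₁, hne, rfl⟩, hmin⟩ := Int.exists_least_of_bdd
    (P := fun z => ∃ σ, σ ∉ B ∧ ∃ d, ∃ h ∈ ghomSet (S.P σ) T d, h ≠ 0 ∧ z = d - w σ)
    ⟨loT - hi - C * (Set.univ : Set Idx).ncard, by
      rintro _ ⟨σ, -, d, h, hh, hne, rfl⟩
      have := hdeg σ d h hh hne
      have := hw1 σ
      omega⟩
    (by obtain ⟨π, hπ, d, h, hh, hne⟩ := hnz; exact ⟨_, π, hπ, d, h, hh, hne, rfl⟩)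
  obtain ⟨g, hg, f', hf', hgf⟩ := S.exists_to_pco hf₁ hne
    (fun d hd h hh => by
      by_contra h0
      have := hmin _ ⟨σ, hσ, d, h, hh, h0, rfl⟩
      omega)
    ((hbd σ).2.1 T) ((hbd σ).2.2 T) (by
      intro i hi' x hx hxU
      have hpr : T.pr (i + d₀) x = 0 := by
        rw [sSup_eq_iSup'] at hxU
        clear hx
        induction hxU using Submodule.iSup_induction' with
        | mem R y hy =>
          obtain ⟨_, ρ, hρ, d, h, hh, rfl⟩ := R
          obtain ⟨x, rfl⟩ := hy
          by_cases h0 : h = 0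
          · rw [h0, LinearMap.zero_apply, map_zero]
          have h1 := hmin _ ⟨ρ, fun hρB => hσ (hB σ ρ hρ.le hρB), d, h, hh, h0, rfl⟩
          have h2 := hw2 σ ρ hρ
          have h3 := ghom_pr hh (i + d₀ - d) x
          rw [sub_add_cancel] at h3
          have h4 := gpr_mem (S.P ρ).internal (i + d₀ - d) x
          rw [(hbd ρ).1 _ (by omega), Submodule.mem_bot] at h4
          rw [← h3, GMod.pr, h4, map_zero]
        | zero => simp
        | add y z _ _ hy hz => rw [map_add, hy, hz, add_zero]
      rw [← gpr_self T.internal _ hx]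
      exact hpr)
  refine ⟨σ, hσ, _, g, hg, S.surj_of_lift hT hg hf' hgf,
    fun T' j hj hji hjr => S.ker_extProp hT hg hf' hgf hj hji hjr, ?_⟩
  rintro D ⟨π, hπ, d, hd, h, hh, h0⟩
  have h1 := hmin _ ⟨π, hπ, d, h, hh, h0, rfl⟩
  have h2 := hw1 σ
  have h3 := hw0 π
  have h4 : ∃ i ≤ hi, ∃ x ∈ (S.P σ).grading i, S.sm σ (S.qm σ x) ≠ 0 := by
    by_contra! hall
    exact S.sm_qm_ne σ ((hbd σ).2.1 _ _ hall)
  obtain ⟨i, hi', x, hx, hx0⟩ := h4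
  refine ⟨i + d₀, by omega, f' (S.qm σ x), ?_, by rwa [hgf]⟩
  have := hf' _ _ (S.qm_ghom σ i x hx)
  rwa [add_zero] at this

end Step

/-! ### Iteration and convergence -/

section Iteration

/-- The subquotient of `V` by the chain `range inc ⊇ inc (ker g)` is, up to a shift, the image
of the homogeneous surjection `g`. -/
theorem sqIso_of_surj {V X N : GMod A} {inc : X.carrier →ₗ[A.carrier] V.carrier}
    (hinc : inc ∈ ghomSet X V 0) (hinj : Function.Injective inc) {d : ℤ}
    {g : X.carrier →ₗ[A.carrier] N.carrier} (hg : g ∈ ghomSet X N d)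
    (hs : Function.Surjective g) :
    SQIso V (LinearMap.range inc) ((LinearMap.ker g).map inc) (GMod.shift (-d) N) := by
  let e₀ := LinearEquiv.ofInjective inc hinj
  let g' : LinearMap.range inc →ₗ[A.carrier] N.carrier := g ∘ₗ e₀.symm.toLinearMap
  have hg' : ∀ x, g' (e₀ x) = g x := fun x => by simp [g']
  have hs' : Function.Surjective g' := hs.comp e₀.symm.surjective
  have hk : ((LinearMap.ker g).map inc).comap (LinearMap.range inc).subtype = LinearMap.ker g' := by
    ext y
    obtain ⟨x, rfl⟩ := e₀.surjective y
    rw [LinearMap.mem_ker, hg', Submodule.mem_comap]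
    change inc x ∈ _ ↔ _
    rw [Submodule.mem_map]
    exact ⟨fun ⟨z, hz, hzx⟩ => hinj hzx ▸ hz, fun h => ⟨x, h, rfl⟩⟩
  let e := (Submodule.quotEquivOfEq _ _ hk).trans (g'.quotKerEquivOfSurjective hs')
  have he : ∀ x, e (Submodule.Quotient.mk (e₀ x)) = g x := hg'
  refine ⟨e, fun i => le_antisymm ?_ ?_⟩
  · rintro _ ⟨_, ⟨y, hy, rfl⟩, rfl⟩
    obtain ⟨x, rfl⟩ := e₀.surjective y
    change e (Submodule.Quotient.mk (e₀ x)) ∈ N.grading (i - -d)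
    rw [he, sub_neg_eq_add]
    refine hg i x (ghom_reflect hinc hinj ?_)
    rw [add_zero]
    exact hy
  · intro y hy
    obtain ⟨x, hx, rfl⟩ := ghom_lift_mem hg (i := i - -d) hy (hs y)
    rw [show i - -d - d = i by ring] at hx
    refine ⟨_, ⟨e₀ x, ?_, rfl⟩, he x⟩
    have := hinc i x hx
    rwa [add_zero] at this

variable (S : AHW A Idx) (V : GMod A)

/-- A graded submodule `U` of `V` (represented by any injective homogeneous map onto it) with
no extensions by standard modules. -/
def AHW.Good (U : Submodule A.carrier V.carrier) : Prop :=
  V.IsGSub U ∧ ∀ (T : GMod A) (j : T.carrier →ₗ[A.carrier] V.carrier), j ∈ ghomSet T V 0 →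
    Function.Injective j → LinearMap.range j = U → ∀ ρ, ExtProp (S.Δ ρ) T

/-- Some `P(π)` with `π ∉ B` has a nonzero map of degree at most `D` to `U ⊆ V`. -/
def AHW.LowHom (B : Set Idx) (U : Submodule A.carrier V.carrier) (D : ℤ) : Prop :=
  ∃ π, π ∉ B ∧ ∃ d ≤ D, ∃ h ∈ ghomSet (S.P π) V d, h ≠ 0 ∧ LinearMap.range h ≤ U

variable {V}

/-- `V` itself, as a submodule, is good. -/
theorem AHW.good_top (h : ∀ ρ, ExtProp (S.Δ ρ) V) : S.Good V ⊤ := by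
  refine ⟨V.isGSub_top, fun T j hj hinj hr ρ d X q hq hs n v hv => ?_⟩
  obtain ⟨v', hv', he⟩ := h ρ d X q hq hs n (j ∘ₗ v) fun i x hx => by
    have := hj _ _ (hv i x hx)
    rwa [add_zero] at this
  obtain ⟨w, hw, hjw⟩ := ghom_factor_inj hj hinj hv' (by rw [hr]; exact le_top)
  refine ⟨w, by rwa [sub_zero] at hw, fun x => hinj ?_⟩
  have := he x
  rwa [← hjw] at this

variable [IsNoetherianRing A.carrier]

/-- One step of the construction of `W(B)`: either `U` has no weights outside `B`, or a proper
costandard module can be split off the top of `U`, in bounded degree relative to the lowest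
weights of `U` outside `B`. -/
theorem AHW.exists_next (B : Set Idx) (hB : ∀ π σ : Idx, π ≤ σ → σ ∈ B → π ∈ B) :
    ∃ E : ℤ, ∀ (V : GMod A) (U : Submodule A.carrier V.carrier), S.Good V U →
      ∃ U', S.Good V U' ∧ U' ≤ U ∧
        (Subsingleton (sqMod V U U') ∨
          ∃ σ, σ ∉ B ∧ ∃ d : ℤ, SQIso V U U' (GMod.shift d (S.pco σ))) ∧
        ∀ D, S.LowHom V B U D → ∃ i ≤ D + E, ∃ x ∈ V.grading i, x ∈ U ∧ x ∉ U' := by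
  obtain ⟨E, hE⟩ := S.exists_step B hB
  refine ⟨E, fun V U hU => ?_⟩
  obtain ⟨T, inc, hinc, hinj, hr⟩ := exists_sub V hU.1
  have hT := hU.2 T inc hinc hinj hr
  have hlow : ∀ D, S.LowHom V B U D →
      ∃ π, π ∉ B ∧ ∃ d ≤ D, ∃ h ∈ ghomSet (S.P π) T d, h ≠ 0 := by
    rintro D ⟨π, hπ, d, hd, h, hh, h0, hle⟩
    obtain ⟨l, hl, rfl⟩ := ghom_factor_inj hinc hinj hh (by rwa [hr])
    refine ⟨π, hπ, d, hd, l, by rwa [sub_zero] at hl, ?_⟩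
    rintro rfl
    exact h0 (by simp)
  by_cases hex : ∃ π, π ∉ B ∧ ∃ d, ∃ h ∈ ghomSet (S.P π) T d, h ≠ 0
  · obtain ⟨σ, hσ, d, g, hg, hgs, hext, hprog⟩ := hE T hT hex
    refine ⟨(LinearMap.ker g).map inc, ⟨ghom_map hinc (ghom_ker hg), ?_⟩, ?_,
      Or.inr ⟨σ, hσ, -d, hr ▸ sqIso_of_surj hinc hinj hg hgs⟩, ?_⟩
    · intro T' j hj hji hjr
      obtain ⟨l, hl, rfl⟩ := ghom_factor_inj hinc hinj hj (by
        rw [hjr]; exact LinearMap.map_le_range)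
      refine hext T' l (by rwa [sub_zero] at hl) (fun x y hxy => hji (congrArg inc hxy)) ?_
      apply Submodule.map_injective_of_injective hinj
      rw [← hjr, LinearMap.range_comp]
    · rw [← hr]
      exact LinearMap.map_le_range
    · intro D hD
      obtain ⟨i, hi, x, hx, h0⟩ := hprog D (hlow D hD)
      refine ⟨i, hi, inc x, by simpa using hinc i x hx, hr ▸ ⟨x, rfl⟩, ?_⟩
      rintro ⟨y, hy, hyx⟩
      exact h0 (hinj hyx ▸ hy)
  · refine ⟨U, hU, le_rfl, Or.inl ?_, fun D hD => ?_⟩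
    · rw [Submodule.Quotient.subsingleton_iff]
      exact Submodule.comap_subtype_self U
    · obtain ⟨π, hπ, d, -, h, hh, h0⟩ := hlow D hD
      exact absurd ⟨π, hπ, d, h, hh, h0⟩ hex

omit [IsNoetherianRing A.carrier] in
/-- A descending sequence of submodules stabilises in bounded degrees. -/
theorem stabilize (hA : A.Laurentian) {V : GMod A} {W : ℕ → Submodule A.carrier V.carrier}
    (hW : Antitone W) (e : ℤ) :
    ∃ N₀, ∀ N ≥ N₀, ∀ i ≤ e, ∀ x ∈ V.grading i, x ∈ W N → x ∈ W (N + 1) := by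
  have := grading_le_finite hA V e
  let F : Submodule k V.carrier := ⨆ i : Set.Iic e, V.grading i
  let K : ℕ → Submodule k V.carrier := fun n => (W n).restrictScalars k ⊓ F
  have hK : Antitone K := fun m n h x hx => ⟨hW h hx.1, hx.2⟩
  have hfin : ∀ n, FiniteDimensional k (K n) := fun n =>
    Submodule.finiteDimensional_of_le (inf_le_right : K n ≤ F)
  let f : ℕ → ℕ := fun n => Module.finrank k (K n)
  have hf : Antitone f := fun m n h => Submodule.finrank_mono (hK h)
  obtain ⟨N₀, hN₀⟩ : ∃ N₀, ∀ n, f N₀ ≤ f n :=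
    ⟨Function.argmin f, fun n => Function.argmin_le f n⟩
  refine ⟨N₀, fun N hN i hi x hx hxW => ?_⟩
  have h1 : K (N + 1) = K N := Submodule.eq_of_le_of_finrank_eq (hK N.le_succ)
    (le_antisymm (hf N.le_succ) ((hf hN).trans (hN₀ _)))
  have h2 : x ∈ K N := ⟨hxW, Submodule.mem_iSup_of_mem (⟨i, hi⟩ : Set.Iic e) hx⟩
  rw [← h1] at h2
  exact h2.1

/-- Each term of a filtration with simple subquotients contains all components of large
degree. -/
theorem AHW.exists_grading_le (Φ : GFilt V)
    (hsimple : ∀ n : ℕ, ∃ (π : Idx) (d : ℤ),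
      SQIso V (Φ.F n) (Φ.F (n + 1)) (GMod.shift d (S.L π))) (n : ℕ) :
    ∃ e : ℤ, ∀ i ≥ e, ∀ x ∈ V.grading i, x ∈ Φ.F n := by
  induction n with
  | zero => exact ⟨0, fun i _ x _ => by rw [Φ.first]; trivial⟩
  | succ n ih =>
    obtain ⟨e, he⟩ := ih
    obtain ⟨π, d, h⟩ := hsimple n
    obtain ⟨X, inc, q, hinc, hinj, hr, hq, -, hk⟩ := sqIso_map (Φ.graded n) h
    obtain ⟨hi, hhi⟩ := simple_bdd_above S.laur (S.simple π)
    refine ⟨max e (hi + d + 1), fun i hei x hx => ?_⟩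
    obtain ⟨y, rfl⟩ : x ∈ LinearMap.range inc :=
      hr ▸ he i ((le_max_left _ _).trans hei) x hx
    rw [← hk]
    have h1 := hq i y (ghom_reflect hinc hinj (by rwa [add_zero]))
    change q y ∈ (S.L π).grading (i + 0 - d) at h1
    rw [hhi _ (by have := (le_max_right e (hi + d + 1)).trans hei; omega)] at h1
    exact h1

/-- A weight of `U/(F ∩ U)` is realised by a map to `U` whose image is not in `F`. -/
theorem AHW.exists_lift_of_mem_supp {U F : Submodule A.carrier V.carrier} (hU : V.IsGSub U)
    (hF : V.IsGSub F) {π : Idx} (h : π ∈ sqSupp S V U (F ⊓ U)) :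
    ∃ d, ∃ h ∈ ghomSet (S.P π) V d, LinearMap.range h ≤ U ∧ ¬ LinearMap.range h ≤ F := by
  obtain ⟨f, d, hf, h0⟩ := h
  have hW : (GMod.sub V U hU).IsGSub ((F ⊓ U).comap U.subtype) :=
    ghom_comap (sub_incl_ghom V hU) (hF.inf hU)
  let Q := GMod.quot (GMod.sub V U hU) _ hW
  let f' : (S.P π).carrier →ₗ[A.carrier] Q.carrier := f
  have hf' : f' ∈ ghomSet (S.P π) Q d := hf
  obtain ⟨l, hl, hlf⟩ := proj_lift (S.proj π) hf' (quot_mk_ghom _ hW) 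
    fun y _ => Submodule.mkQ_surjective _ y
  rw [sub_zero] at hl
  refine ⟨d + 0, _, ghom_comp (sub_incl_ghom V hU) hl, ?_, fun hle => h0 ?_⟩
  · rintro _ ⟨x, rfl⟩
    exact (l x).2
  · change f' = 0
    rw [← hlf]
    refine LinearMap.ext fun x => ?_
    exact (Submodule.Quotient.mk_eq_zero _).2 ⟨hle ⟨x, rfl⟩, (l x).2⟩

/-- The filtration by iterated splitting off of proper costandard modules; each subquotient is zero
or a single shifted `∇̄(σ)` with `σ ∉ B`. -/
theorem AHW.saturated_filtration (Φv : GFilt V)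
    (hsimple : ∀ n : ℕ, ∃ (π : Idx) (d : ℤ),
      SQIso V (Φv.F n) (Φv.F (n + 1)) (GMod.shift d (S.L π)))
    (hext : ∀ σ : Idx, Ext1Vanish (S.Δ σ) V)
    (B : Set Idx) (hB : ∀ π σ : Idx, π ≤ σ → σ ∈ B → π ∈ B) :
    ∃ W : ℕ → Submodule A.carrier V.carrier,
      W 0 = ⊤ ∧ (∀ r, W (r + 1) ≤ W r) ∧ (∀ r, V.IsGSub (W r)) ∧
      (∀ r, Subsingleton (sqMod V (W r) (W (r + 1))) ∨ ∃ σ : Idx, σ ∉ B ∧ ∃ d : ℤ,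
        SQIso V (W r) (W (r + 1)) (GMod.shift d (S.pco σ))) ∧
      ∀ n : ℕ, ∃ N0 : ℕ, ∀ N : ℕ, N0 ≤ N → sqSupp S V (W N) (Φv.F n ⊓ W N) ⊆ B := by
  obtain ⟨E, hE⟩ := S.exists_next B hB
  choose! next hgood hle hsq hprog using hE V
  let W : ℕ → Submodule A.carrier V.carrier := fun n => next^[n] ⊤
  have hsucc : ∀ n, W (n + 1) = next (W n) := fun n => Function.iterate_succ_apply' next n ⊤
  have hW : ∀ n, S.Good V (W n) := by
    intro n
    induction n with
    | zero => exact S.good_top fun ρ => extProp_of_ext1 (hext ρ)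
    | succ n ih => rw [hsucc]; exact hgood _ ih
  have hanti : ∀ n, W (n + 1) ≤ W n := fun n => by rw [hsucc]; exact hle _ (hW n)
  refine ⟨W, rfl, hanti, fun n => (hW n).1, fun n => by rw [hsucc]; exact hsq _ (hW n),
    fun n => ?_⟩
  obtain ⟨e, he⟩ := S.exists_grading_le Φv hsimple n
  obtain ⟨lo, hi, hbd⟩ := S.exists_bounds
  obtain ⟨N₀, hN₀⟩ := stabilize S.laur (antitone_nat_of_succ_le hanti) (e - lo + E)
  refine ⟨N₀, fun N hN π hπ => by_contra fun hπB => ?_⟩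
  obtain ⟨d, h, hh, hr, hnF⟩ := S.exists_lift_of_mem_supp (hW N).1 (Φv.graded n) hπ
  -- The image of `h` lies in `Φv.F n` if all of it has degree at least `e`.
  have hd : d ≤ e - lo := by
    by_contra! hd
    refine hnF ?_
    rintro _ ⟨x, rfl⟩
    induction x using hom_induction (S.P π).internal with
    | h0 => rw [map_zero]; exact Submodule.zero_mem _
    | hadd x y hx hy => rw [map_add]; exact Submodule.add_mem _ hx hy
    | hhom i x hx =>
      by_cases hi : i < lo
      · rw [(hbd π).1 i hi, Submodule.mem_bot] at hx
        rw [hx, map_zero]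
        exact Submodule.zero_mem _
      · exact he _ (by omega) _ (hh i x hx)
  obtain ⟨i, hi, x, hx, hxW, hxn⟩ := hprog (W N) (hW N) (e - lo)
    ⟨π, hπB, d, hd, h, hh, fun h0 => hnF (by rw [h0, LinearMap.range_zero]; exact bot_le), hr⟩
  rw [← hsucc] at hxn
  exact hxn (hN₀ N hN i hi x hx hxW)

end Iteration

/-- Given `V` with a separated filtration with simple
subquotients and `ext¹(Δ(σ), V) = 0` for all `σ`, for every saturated subset
`A ⊆ Π` there is a filtration `W(A)` of `V` such that (α) each subquotient
`W(A)_r/W(A)_{r+1}` has a finite `∇̄`-filtration with subquotients shifts of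
`∇̄(σ)`, `σ ∉ A`, and (β) for each `n`, `supp(W(A)_N/(V_n ∩ W(A)_N)) ⊆ A` for
all sufficiently large `N`. -/
theorem saturated_subset_filtration
    {k : Type} [Field k] (A : GAlg k)
    (Idx : Type) [Fintype Idx] [PartialOrder Idx] (S : AHW A Idx)
    (V : GMod A) (Φv : GFilt V)
    (hsimple : ∀ n : ℕ, ∃ (π : Idx) (d : ℤ),
      SQIso V (Φv.F n) (Φv.F (n + 1)) (GMod.shift d (S.L π)))
    (hext : ∀ σ : Idx, Ext1Vanish (S.Δ σ) V)
    (Asat : Set Idx) (hsat : ∀ π σ : Idx, π ≤ σ → σ ∈ Asat → π ∈ Asat) :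
    ∃ W : ℕ → Submodule A.carrier V.carrier,
      W 0 = ⊤ ∧ (∀ r, W (r + 1) ≤ W r) ∧ (∀ r, V.IsGSub (W r)) ∧
      (∀ r : ℕ, ∃ (Nr : ℕ) (G : ℕ → Submodule A.carrier V.carrier),
        G 0 = W r ∧ (∀ m, G (m + 1) ≤ G m) ∧ (∀ m, V.IsGSub (G m)) ∧
        G Nr = W (r + 1) ∧ (∀ m, W (r + 1) ≤ G m) ∧
        ∀ m : ℕ, Subsingleton (sqMod V (G m) (G (m + 1))) ∨
          ∃ σ : Idx, σ ∉ Asat ∧ ∃ d : ℤ,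
            SQIso V (G m) (G (m + 1)) (GMod.shift d (S.pco σ))) ∧
      (∀ n : ℕ, ∃ N0 : ℕ, ∀ N : ℕ, N0 ≤ N →
        sqSupp S V (W N) (Φv.F n ⊓ W N) ⊆ Asat) := by
  have := S.noeth
  obtain ⟨W, h0, hanti, hgr, hsq, hsupp⟩ := S.saturated_filtration Φv hsimple hext Asat hsat
  refine ⟨W, h0, hanti, hgr, fun r => ⟨1, fun m => if m = 0 then W r else W (r + 1), rfl, ?_, ?_,
    rfl, ?_, ?_⟩, hsupp⟩
  · rintro (_ | m)
    · exact hanti r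
    · exact le_rfl
  · rintro (_ | m)
    · exact hgr r
    · exact hgr (r + 1)
  · rintro (_ | m)
    · exact hanti r
    · exact le_rfl
  · rintro (_ | m)
    · exact hsq r
    · left
      rw [Submodule.Quotient.subsingleton_iff]
      exact Submodule.comap_subtype_self _
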